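/- Let k ≥ 1 be an integer and let G be a planar simple graph with girth at least 5. Then the k-frugal chromatic number satisfies χ_k(G) ≤ ⌈(Δ(G) + 10)/k⌉ + 6. -/

import Mathlib

open SimpleGraph

/-- A drawing of a simple graph in the plane: vertices are mapped to distinct points,
edges to arcs (injective continuous curves parametrised on `[0,1]`) joining the images of
their endpoints, whose interiors avoid the vertex points and each other. -/
structure PlaneEmbedding {V : Type*} (G : SimpleGraph V) where
  pos : V → ℝ × ℝ
  inj : Function.Injective pos
  arc : G.edgeSet → ℝ → ℝ × ℝ
  arc_cont : ∀ e, ContinuousOn (arc e) (Set.Icc 0 1)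
  arc_inj : ∀ e, Set.InjOn (arc e) (Set.Icc 0 1)
  arc_ends : ∀ e : G.edgeSet, ∃ u v : V, (e : Sym2 V) = s(u, v) ∧
      arc e 0 = pos u ∧ arc e 1 = pos v
  arc_avoid : ∀ e : G.edgeSet, ∀ t ∈ Set.Ioo (0:ℝ) 1, arc e t ∉ Set.range pos
  arc_disjoint : ∀ e f : G.edgeSet, e ≠ f → ∀ s ∈ Set.Ioo (0:ℝ) 1, ∀ t ∈ Set.Ioo (0:ℝ) 1,
      arc e s ≠ arc f t

/-- A graph is planar if it admits a drawing in the plane. -/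
def SimpleGraph.IsPlanar {V : Type*} (G : SimpleGraph V) : Prop :=
  Nonempty (PlaneEmbedding G)

/-- A `k`-frugal colouring: a proper vertex colouring in which no colour appears more than
`k` times in the neighbourhood of any vertex. -/
def SimpleGraph.IsFrugalColoring {V α : Type*} (G : SimpleGraph V) (k : ℕ) (c : V → α) : Prop :=
  (∀ u v, G.Adj u v → c u ≠ c v) ∧
  ∀ (v : V) (a : α), {u | u ∈ G.neighborSet v ∧ c u = a}.ncard ≤ k

/-- The `k`-frugal chromatic number `χ_k(G)`: the least number of colours in a `k`-frugal
colouring of `G`. -/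
noncomputable def SimpleGraph.frugalChromaticNumber {V : Type*} (G : SimpleGraph V) (k : ℕ) : ℕ :=
  sInf {n : ℕ | ∃ c : V → ℕ, (∀ v, c v < n) ∧ G.IsFrugalColoring k c}

/-! Parity replaces the Jordan curve theorem. Along an arc that avoids a point `x` of the plane, a
continuous logarithm around `x` differs from the principal one by a number of full turns. For three
arcs with common ends that are otherwise disjoint, each carrying a marked point, a homotopy shows
that the turns of the arcs around the marked points of the other two add up to an odd number. In a
plane embedding, the parity of the turns of a cycle around a point of an edge thus says on which
side of the cycle the edge lies, so a cycle with a chord path splits the drawing into two smaller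
ones. Induction on the number of edges then gives `g * |E| + (g + 2) ≤ (g + 2) * |V|` for girth at
least `g + 2`, the Euler bound, without faces.

For girth at least `5`, every nonempty subgraph therefore satisfies `3 * |E| < 5 * |V|`. Give each
vertex the charge `9 * deg - 30`, of negative total, and let charge flow towards the vertices of
degree `2` and `3`. Some vertex has degree `1`, or some edge has one end of degree `2` or both ends
of degree `3`, with few colours forbidden at either end. Delete that vertex, or that edge (for
`k ≥ 2` its end of degree `2` instead, if there is one), colour the rest by induction, and recolour
greedily what was touched. -/

section LogChange

open unitInterval Complex

theorem exists_continuous_log {X : Type*} [TopologicalSpace X] [SimplyConnectedSpace X]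
    [LocallyPathConnectedSpace X] {g : X → ℂ} (hg : Continuous g) (hg₀ : ∀ x, g x ≠ 0) :
    ∃ L : X → ℂ, Continuous L ∧ ∀ x, exp (L x) = g x := by
  obtain ⟨x₀⟩ := (inferInstance : Nonempty X)
  obtain ⟨L, ⟨-, hL⟩, -⟩ := isCoveringMapOn_exp.existsUnique_continuousMap_lifts
    (⟨g, hg⟩ : C(X, ℂ)) (exp_log (hg₀ x₀)) hg₀
  exact ⟨L, L.continuous, congr_fun hL⟩

theorem exists_continuous_log_square {F : I × I → ℂ} (hF : Continuous F) (hF₀ : ∀ p, F p ≠ 0) :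
    ∃ L : I × I → ℂ, Continuous L ∧ ∀ p, exp (L p) = F p := by
  let retraction : ℝ × ℝ → I × I :=
    Prod.map (Set.projIcc 0 1 zero_le_one) (Set.projIcc 0 1 zero_le_one)
  obtain ⟨L, hL, hLF⟩ := exists_continuous_log (g := F ∘ retraction)
    (hF.comp (continuous_projIcc.prodMap continuous_projIcc)) fun _ => hF₀ _
  exact ⟨fun p => L (p.1, p.2), by fun_prop, fun p => by simp [hLF, retraction]⟩

theorem exists_continuous_log_unitInterval {g : I → ℂ} (hg : Continuous g) (hg₀ : ∀ t, g t ≠ 0) :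
    ∃ L : I → ℂ, Continuous L ∧ ∀ t, exp (L t) = g t := by
  obtain ⟨L, hL, hLg⟩ := exists_continuous_log_square (F := fun p => g p.1) (by fun_prop)
    fun p => hg₀ p.1
  exact ⟨fun t => L (t, 0), by fun_prop, fun t => hLg (t, 0)⟩

open Classical in
/-- The total change of a continuous logarithm of `g` along the unit interval; the junk value
when `g` has no continuous logarithm is `0`. -/
noncomputable def logChange (g : I → ℂ) : ℂ :=
  if h : ∃ L : I → ℂ, Continuous L ∧ ∀ t, exp (L t) = g t then h.choose 1 - h.choose 0 else 0

theorem sub_eq_sub_of_exp_eq {L M : I → ℂ} (hL : Continuous L) (hM : Continuous M)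
    (h : ∀ t, exp (M t) = exp (L t)) : M 1 - M 0 = L 1 - L 0 := by
  have hintegral (t : I) : ∃ n : ℤ, ((n : ℝ) : ℂ) = (M t - L t) / (2 * Real.pi * Complex.I) := by
    obtain ⟨n, hn⟩ := exp_eq_exp_iff_exists_int.1 (h t)
    exact ⟨n, by rw [hn]; push_cast; field_simp; ring⟩
  have hconst := isPreconnected_univ.constant_of_mapsTo
    (f := fun t => (M t - L t) / (2 * Real.pi * Complex.I))
    (isUniformEmbedding_ofReal.isEmbedding.comp
      Int.isClosedEmbedding_coe_real.isEmbedding).isDiscrete_range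
    (by fun_prop) (fun t _ => hintegral t) (Set.mem_univ 1) (Set.mem_univ 0)
  linear_combination (div_left_inj' two_pi_I_ne_zero).1 hconst

variable {g : I → ℂ}

theorem logChange_eq {L : I → ℂ} (hL : Continuous L) (h : ∀ t, exp (L t) = g t) :
    logChange g = L 1 - L 0 := by
  have hex : ∃ L : I → ℂ, Continuous L ∧ ∀ t, exp (L t) = g t := ⟨L, hL, h⟩
  rw [logChange, dif_pos hex]
  exact sub_eq_sub_of_exp_eq hL hex.choose_spec.1 fun t => (hex.choose_spec.2 t).trans (h t).symm

theorem exp_logChange (hg : Continuous g) (hg₀ : ∀ t, g t ≠ 0) :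
    exp (logChange g) = g 1 / g 0 := by
  obtain ⟨L, hL, h⟩ := exists_continuous_log_unitInterval hg hg₀
  rw [logChange_eq hL h, exp_sub, h, h]

theorem logChange_neg (hg : Continuous g) (hg₀ : ∀ t, g t ≠ 0) :
    logChange (fun t => -g t) = logChange g := by
  obtain ⟨L, hL, h⟩ := exists_continuous_log_unitInterval hg hg₀
  rw [logChange_eq hL h, logChange_eq (L := fun t => L t + Real.pi * Complex.I) (by fun_prop)
    fun t => by rw [exp_add, h, exp_pi_mul_I, mul_neg_one]]
  ring

theorem logChange_comp_symm (hg : Continuous g) (hg₀ : ∀ t, g t ≠ 0) :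
    logChange (fun t => g (σ t)) = -logChange g := by
  obtain ⟨L, hL, h⟩ := exists_continuous_log_unitInterval hg hg₀
  rw [logChange_eq hL h, logChange_eq (hL.comp continuous_symm) fun t => h (σ t)]
  simp

theorem logChange_trans {x y w z : ℂ} {A : Path x y} {B : Path y w} (hA : ∀ t, A t ≠ z)
    (hB : ∀ t, B t ≠ z) :
    logChange (fun t => A.trans B t - z) =
      logChange (fun t => A t - z) + logChange (fun t => B t - z) := by
  obtain ⟨L, hL, hLA⟩ := exists_continuous_log_unitInterval (g := fun t => A t - z)
    (by fun_prop) fun t => sub_ne_zero.2 (hA t)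
  obtain ⟨M, hM, hMB⟩ := exists_continuous_log_unitInterval (g := fun t => B t - z)
    (by fun_prop) fun t => sub_ne_zero.2 (hB t)
  have hjoin : exp (M 0) = exp (L 1) := by simp [hLA, hMB]
  let logA : Path (L 0) (L 1) := ⟨⟨L, hL⟩, rfl, rfl⟩
  let logB : Path (L 1) (L 1 + (M 1 - M 0)) :=
    ⟨⟨fun t => L 1 + (M t - M 0), by fun_prop⟩, by simp, rfl⟩
  have hlog (t : I) : exp (logA.trans logB t) = A.trans B t - z := by
    simp only [Path.trans_apply]
    split_ifs
    · exact hLA _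
    · simp [logB, exp_add, exp_sub, hjoin, hMB, mul_div_cancel₀]
  rw [logChange_eq hL hLA, logChange_eq hM hMB, logChange_eq (logA.trans logB).continuous hlog,
    Path.source, Path.target]
  ring

theorem logChange_boundary_square {F : I × I → ℂ} (hF : Continuous F) (hF₀ : ∀ p, F p ≠ 0) :
    logChange (fun s => F (s, 0)) + logChange (fun t => F (1, t)) =
      logChange (fun t => F (0, t)) + logChange (fun s => F (s, 1)) := by
  obtain ⟨L, hL, h⟩ := exists_continuous_log_square hF hF₀
  rw [logChange_eq (L := fun s => L (s, 0)) (by fun_prop) fun s => h (s, 0),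
    logChange_eq (L := fun t => L (1, t)) (by fun_prop) fun t => h (1, t),
    logChange_eq (L := fun t => L (0, t)) (by fun_prop) fun t => h (0, t),
    logChange_eq (L := fun s => L (s, 1)) (by fun_prop) fun s => h (s, 1)]
  ring

end LogChange

section Turns

open unitInterval Complex

/-- The number of full turns of a nonvanishing curve `g` around the origin, counted relative to
the principal logarithms of its ends; for a closed curve this is the winding number. -/
noncomputable def turns (g : I → ℂ) : ℤ :=
  round ((logChange g - (log (g 1) - log (g 0))) / (2 * Real.pi * Complex.I)).re

variable {g : I → ℂ}

theorem logChange_eq_turns (hg : Continuous g) (hg₀ : ∀ t, g t ≠ 0) :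
    logChange g = log (g 1) - log (g 0) + 2 * Real.pi * Complex.I * turns g := by
  have hexp : exp (logChange g) = exp (log (g 1) - log (g 0)) := by
    rw [exp_logChange hg hg₀, exp_sub, exp_log (hg₀ 1), exp_log (hg₀ 0)]
  obtain ⟨n, hn⟩ := exp_eq_exp_iff_exists_int.1 hexp
  have hturns : turns g = n := by
    rw [turns, hn, add_sub_cancel_left, mul_div_cancel_right₀ _ two_pi_I_ne_zero]
    simp
  rw [hn, hturns, mul_comm (n : ℂ)]

theorem turns_eq_iff {n : ℤ} (hg : Continuous g) (hg₀ : ∀ t, g t ≠ 0) :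
    turns g = n ↔ logChange g = log (g 1) - log (g 0) + 2 * Real.pi * Complex.I * n := by
  rw [logChange_eq_turns hg hg₀, add_right_inj, mul_right_inj' two_pi_I_ne_zero, Int.cast_inj]

theorem turns_const {c : ℂ} (hc : c ≠ 0) : turns (fun _ => c) = 0 := by
  rw [turns_eq_iff continuous_const fun _ => hc,
    logChange_eq (L := fun _ => log c) continuous_const fun _ => exp_log hc]
  simp

theorem turns_comp_symm (hg : Continuous g) (hg₀ : ∀ t, g t ≠ 0) :
    turns (fun t => g (σ t)) = -turns g := by
  rw [turns_eq_iff (by fun_prop) fun t => hg₀ (σ t), logChange_comp_symm hg hg₀,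
    logChange_eq_turns hg hg₀]
  push_cast
  simp
  ring

theorem turns_trans {x y w z : ℂ} {A : Path x y} {B : Path y w} (hA : ∀ t, A t ≠ z)
    (hB : ∀ t, B t ≠ z) :
    turns (fun t => A.trans B t - z) = turns (fun t => A t - z) + turns (fun t => B t - z) := by
  have hAB (t : I) : A.trans B t ≠ z := by
    rw [Path.trans_apply]
    split_ifs
    exacts [hA _, hB _]
  rw [turns_eq_iff (by fun_prop) fun t => sub_ne_zero.2 (hAB t), logChange_trans hA hB,
    logChange_eq_turns (by fun_prop) fun t => sub_ne_zero.2 (hA t),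
    logChange_eq_turns (by fun_prop) fun t => sub_ne_zero.2 (hB t)]
  push_cast
  simp
  ring

theorem turns_sub_eq_of_closed {x : ℂ} {C : Path x x} {g : I → ℂ} (hg : Continuous g)
    (h : ∀ s t, C s ≠ g t) : turns (fun s => C s - g 0) = turns (fun s => C s - g 1) := by
  have hsquare := logChange_boundary_square (F := fun p => C p.1 - g p.2) (by fun_prop)
    fun p => sub_ne_zero.2 (h p.1 p.2)
  have hlog : logChange (fun s => C s - g 0) = logChange (fun s => C s - g 1) := by
    simp only [Path.source, Path.target] at hsquare
    linear_combination hsquare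
  rw [turns_eq_iff (by fun_prop) fun s => sub_ne_zero.2 (h s 0), hlog,
    logChange_eq_turns (by fun_prop) fun s => sub_ne_zero.2 (h s 1)]
  simp

end Turns

section Theta

open unitInterval Complex

variable {a b : ℂ} {A B A₁ A₂ A₃ : Path a b} {r q r₁ r₂ r₃ : I}

/-- A path from `a` to `b` with a marked parameter `r`, which leaves `a` at once and does not
reach `b` up to time `r`. -/
structure IsMarkedArc (A : Path a b) (r : I) : Prop where
  ne_zero : r ≠ 0
  eq_zero_of_eq_source : ∀ s, A s = a → s = 0
  ne_target : ∀ s ≤ r, A s ≠ b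

/-- Two paths from `a` to `b` that have no common point besides `a` and `b`. -/
def MeetOnlyAtEnds (A B : Path a b) : Prop := ∀ s t, A s = B t → A s = a ∨ A s = b

theorem MeetOnlyAtEnds.symm (h : MeetOnlyAtEnds A B) : MeetOnlyAtEnds B A :=
  fun s t e => e ▸ h t s e.symm

theorem MeetOnlyAtEnds.apply_ne (h : MeetOnlyAtEnds A B) (hA : IsMarkedArc A r)
    (hB : IsMarkedArc B q) {s t : I} (ht : t ≤ q) (hst : s = 0 → t ≠ 0) : A s ≠ B t := by
  intro e
  rcases h s t e with hs | hs
  · exact hst (hA.eq_zero_of_eq_source s hs) (hB.eq_zero_of_eq_source t (e ▸ hs))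
  · exact hB.ne_target t ht (e ▸ hs)

/-- The chord between the arcs `A` and `B` whose ends move, at constant speeds, from `A r` to the
start of `A` and from the start of `B` to `B q`. -/
noncomputable def slidingChord (A : Path a b) (r : I) (B : Path a b) (q : I) : I → ℂ :=
  fun t => A (σ t * r) - B (t * q)

theorem continuous_slidingChord : Continuous (slidingChord A r B q) := by
  unfold slidingChord
  fun_prop

theorem slidingChord_ne_zero (h : MeetOnlyAtEnds A B) (hA : IsMarkedArc A r)
    (hB : IsMarkedArc B q) (t : I) : slidingChord A r B q t ≠ 0 := by
  refine sub_ne_zero.2 (h.apply_ne hA hB unitInterval.mul_le_right fun hs ht => ?_)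
  have ht : t = 0 := (mul_eq_zero.1 ht).resolve_right hB.ne_zero
  exact hA.ne_zero (by simpa [ht] using hs)

theorem logChange_slidingChord_swap (h : MeetOnlyAtEnds A B) (hA : IsMarkedArc A r)
    (hB : IsMarkedArc B q) :
    logChange (slidingChord B q A r) = -logChange (slidingChord A r B q) := by
  rw [← logChange_comp_symm continuous_slidingChord (slidingChord_ne_zero h hA hB),
    ← logChange_neg continuous_slidingChord (slidingChord_ne_zero h.symm hB hA)]
  congr 1
  ext t
  simp [slidingChord]

theorem exp_logChange_slidingChord (h : MeetOnlyAtEnds A B) (hA : IsMarkedArc A r)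
    (hB : IsMarkedArc B q) :
    exp (logChange (slidingChord A r B q)) = (a - B q) / (A r - a) := by
  rw [exp_logChange continuous_slidingChord (slidingChord_ne_zero h hA hB)]
  simp [slidingChord]

theorem logChange_slidingChord (h : MeetOnlyAtEnds A B) (hA : IsMarkedArc A r)
    (hB : IsMarkedArc B q) :
    logChange (fun s => A (σ (σ s * σ r)) - a) + logChange (fun t => b - B (t * q)) =
      logChange (slidingChord A r B q) + logChange (fun s => A s - B q) := by
  have hsquare := logChange_boundary_square
    (F := fun p => A (σ (σ p.1 * σ (σ p.2 * r))) - B (p.2 * q)) (by fun_prop) ?_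
  · unfold slidingChord
    simpa using hsquare
  · rintro ⟨s, t⟩
    refine sub_ne_zero.2 (h.apply_ne hA hB unitInterval.mul_le_right fun hs ht => ?_)
    have ht : t = 0 := (mul_eq_zero.1 ht).resolve_right hB.ne_zero
    have hone : σ s * σ r = 1 := by simpa [ht, unitInterval.symm_eq_zero] using hs
    have hr : (1 : I) ≤ σ r := hone ▸ unitInterval.mul_le_right
    exact hA.ne_zero (unitInterval.symm_eq_one.1 (le_antisymm le_one' hr))

theorem logChange_theta (h₁₂ : MeetOnlyAtEnds A₁ A₂) (h₂₃ : MeetOnlyAtEnds A₂ A₃)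
    (h₃₁ : MeetOnlyAtEnds A₃ A₁) (h₁ : IsMarkedArc A₁ r₁) (h₂ : IsMarkedArc A₂ r₂)
    (h₃ : IsMarkedArc A₃ r₃) :
    ∃ n : ℤ, (logChange (fun s => A₁ s - A₃ r₃) - logChange (fun s => A₂ s - A₃ r₃)) +
      (logChange (fun s => A₂ s - A₁ r₁) - logChange (fun s => A₃ s - A₁ r₁)) +
      (logChange (fun s => A₃ s - A₂ r₂) - logChange (fun s => A₁ s - A₂ r₂)) =
        2 * Real.pi * Complex.I * (2 * n + 1) := by
  have hsub {A : Path a b} {r : I} (h : IsMarkedArc A r) : A r - a ≠ 0 := fun e =>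
    h.ne_zero (h.eq_zero_of_eq_source r (sub_eq_zero.1 e))
  have hchords : exp (logChange (slidingChord A₁ r₁ A₂ r₂) + logChange (slidingChord A₂ r₂ A₃ r₃) +
      logChange (slidingChord A₃ r₃ A₁ r₁)) = exp (Real.pi * Complex.I) := by
    have := hsub h₁
    have := hsub h₂
    have := hsub h₃
    rw [exp_add, exp_add, exp_logChange_slidingChord h₁₂ h₁ h₂,
      exp_logChange_slidingChord h₂₃ h₂ h₃, exp_logChange_slidingChord h₃₁ h₃ h₁, exp_pi_mul_I]
    field_simp
    ring
  obtain ⟨n, hn⟩ := exp_eq_exp_iff_exists_int.1 hchords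
  have e₁₂ := logChange_slidingChord h₁₂ h₁ h₂
  have e₂₃ := logChange_slidingChord h₂₃ h₂ h₃
  have e₃₁ := logChange_slidingChord h₃₁ h₃ h₁
  have e₂₁ := logChange_slidingChord h₁₂.symm h₂ h₁
  have e₃₂ := logChange_slidingChord h₂₃.symm h₃ h₂
  have e₁₃ := logChange_slidingChord h₃₁.symm h₁ h₃
  rw [logChange_slidingChord_swap h₁₂ h₁ h₂] at e₂₁
  rw [logChange_slidingChord_swap h₂₃ h₂ h₃] at e₃₂
  rw [logChange_slidingChord_swap h₃₁ h₃ h₁] at e₁₃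
  exact ⟨n, by linear_combination e₁₂ + e₂₃ + e₃₁ - e₂₁ - e₃₂ - e₁₃ + 2 * hn⟩

theorem MeetOnlyAtEnds.apply_ne_mark (h : MeetOnlyAtEnds A B) (hA : IsMarkedArc A r)
    (hB : IsMarkedArc B q) (s : I) : A s ≠ B q :=
  h.apply_ne hA hB le_rfl fun _ => hB.ne_zero

/-- Three arcs from `a` to `b` that meet only at their ends form a theta curve: the number of arcs
whose marked point is separated from infinity by the other two is odd. -/
theorem odd_turns_theta (h₁₂ : MeetOnlyAtEnds A₁ A₂) (h₂₃ : MeetOnlyAtEnds A₂ A₃)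
    (h₃₁ : MeetOnlyAtEnds A₃ A₁) (h₁ : IsMarkedArc A₁ r₁) (h₂ : IsMarkedArc A₂ r₂)
    (h₃ : IsMarkedArc A₃ r₃) :
    Odd ((turns (fun s => A₁ s - A₃ r₃) - turns (fun s => A₂ s - A₃ r₃)) +
      (turns (fun s => A₂ s - A₁ r₁) - turns (fun s => A₃ s - A₁ r₁)) +
      (turns (fun s => A₃ s - A₂ r₂) - turns (fun s => A₁ s - A₂ r₂))) := by
  obtain ⟨n, hn⟩ := logChange_theta h₁₂ h₂₃ h₃₁ h₁ h₂ h₃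
  have hturns {A B : Path a b} {r q : I} (h : MeetOnlyAtEnds A B) (hA : IsMarkedArc A r)
      (hB : IsMarkedArc B q) : logChange (fun s => A s - B q) =
        log (b - B q) - log (a - B q) + 2 * Real.pi * Complex.I * turns (fun s => A s - B q) := by
    rw [logChange_eq_turns (by fun_prop) fun s => sub_ne_zero.2 (h.apply_ne_mark hA hB s)]
    simp
  rw [hturns h₁₂ h₁ h₂, hturns h₂₃ h₂ h₃, hturns h₃₁ h₃ h₁, hturns h₁₂.symm h₂ h₁,
    hturns h₂₃.symm h₃ h₂, hturns h₃₁.symm h₁ h₃] at hn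
  refine ⟨n, Int.cast_injective (α := ℂ) (mul_left_cancel₀ two_pi_I_ne_zero ?_)⟩
  push_cast
  linear_combination hn

end Theta

section MarkedTrans

open unitInterval

/-- The midpoint `1/2` as an element of the unit interval. -/
noncomputable def unitMidpoint : I := ⟨1 / 2, by norm_num, by norm_num⟩

theorem symm_unitMidpoint : σ unitMidpoint = unitMidpoint :=
  Subtype.ext (by norm_num [unitMidpoint])

theorem unitMidpoint_pos : 0 < unitMidpoint := Subtype.coe_lt_coe.1 (by norm_num [unitMidpoint])

theorem unitMidpoint_lt_one : unitMidpoint < 1 := Subtype.coe_lt_coe.1 (by norm_num [unitMidpoint])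

variable {x y z : ℂ} {A : Path x y} {B : Path y z} {r : I}

theorem trans_unitMidpoint_mul : A.trans B (unitMidpoint * r) = A r := by
  have hr : (1 / 2 : ℝ) * r ≤ 1 / 2 := by linarith [r.2.2]
  simp only [Path.trans_apply, unitMidpoint, Set.Icc.coe_mul, hr, dif_pos]
  congr 1
  exact Subtype.ext (by ring)

theorem trans_symm_unitMidpoint_mul : A.trans B (σ (unitMidpoint * σ r)) = B r := by
  change (A.trans B).symm (unitMidpoint * σ r) = B r
  rw [Path.trans_symm, trans_unitMidpoint_mul]
  simp

theorem eq_zero_of_trans_eq_source (hA : ∀ s, A s = x → s = 0) (hB : ∀ t, B t ≠ x) (s : I)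
    (hs : A.trans B s = x) : s = 0 := by
  rw [Path.trans_apply] at hs
  split_ifs at hs with h
  · have := congr_arg Subtype.val (hA _ hs)
    exact Subtype.ext (by simpa using this)
  · exact (hB _ hs).elim

theorem isMarkedArc_trans_left (hr : r ≠ 0) (hA : ∀ s, A s = x → s = 0) (hAz : ∀ s ≤ r, A s ≠ z)
    (hB : ∀ t, B t ≠ x) : IsMarkedArc (A.trans B) (unitMidpoint * r) where
  ne_zero := mul_ne_zero unitMidpoint_pos.ne' hr
  eq_zero_of_eq_source := eq_zero_of_trans_eq_source hA hB
  ne_target s hs := by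
    have hsr : (s : ℝ) ≤ 1 / 2 * r := hs
    rw [Path.trans_apply, dif_pos (by linarith [r.2.2])]
    exact hAz _ (Subtype.coe_le_coe.1 (by simp; linarith))

theorem isMarkedArc_trans_right (hA : ∀ s, A s = x → s = 0) (hAz : ∀ s, A s ≠ z)
    (hB : ∀ t, B t ≠ x) (hBr : IsMarkedArc B r) :
    IsMarkedArc (A.trans B) (σ (unitMidpoint * σ r)) where
  ne_zero h := by
    have := congr_arg Subtype.val h
    simp only [coe_symm_eq, unitMidpoint, Set.Icc.coe_mul, Set.Icc.coe_zero] at this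
    linarith [r.2.1]
  eq_zero_of_eq_source := eq_zero_of_trans_eq_source hA hB
  ne_target s hs := by
    have hsr : (s : ℝ) ≤ 1 - 1 / 2 * (1 - r) := hs
    rw [Path.trans_apply]
    split_ifs
    · exact hAz _
    · exact hBr.ne_target _ (Subtype.coe_le_coe.1 (by simp; linarith))

end MarkedTrans

namespace PlaneEmbedding

open unitInterval

section Drawing

variable {V : Type*} {G : SimpleGraph V} (d : PlaneEmbedding G)

/-- The point of the complex plane that represents a vertex. -/
noncomputable def point (v : V) : ℂ := Complex.equivRealProdCLM.symm (d.pos v)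

open Classical in
/-- The arc of an edge as a curve in the complex plane; the junk value off `G.edgeSet` is `0`. -/
noncomputable def curve (e : Sym2 V) (t : I) : ℂ :=
  if h : e ∈ G.edgeSet then Complex.equivRealProdCLM.symm (d.arc ⟨e, h⟩ t) else 0

/-- The midpoint of the arc of an edge. -/
noncomputable def mid (e : Sym2 V) : ℂ := d.curve e unitMidpoint

/-- The arc of an edge without its ends. -/
def inner (e : Sym2 V) : Set ℂ := d.curve e '' Set.Ioo 0 1

theorem point_injective : Function.Injective d.point :=
  Complex.equivRealProdCLM.symm.injective.comp d.inj

theorem mid_mem_inner (e : Sym2 V) : d.mid e ∈ d.inner e :=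
  ⟨unitMidpoint, ⟨unitMidpoint_pos, unitMidpoint_lt_one⟩, rfl⟩

theorem continuous_curve (e : Sym2 V) : Continuous (d.curve e) := by
  by_cases h : e ∈ G.edgeSet
  · unfold curve
    simp only [h, dif_pos]
    exact Complex.equivRealProdCLM.symm.continuous.comp
      ((d.arc_cont _).comp_continuous continuous_subtype_val Subtype.prop)
  · unfold curve
    simpa only [h, dif_neg, not_false_eq_true] using continuous_const

variable {d} {e f : Sym2 V} {u v : V}

theorem point_notMem_inner (he : e ∈ G.edgeSet) (v : V) : d.point v ∉ d.inner e := by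
  rintro ⟨t, ht, h⟩
  simp only [curve, he, dif_pos, point, EmbeddingLike.apply_eq_iff_eq] at h
  exact d.arc_avoid ⟨e, he⟩ t ht ⟨v, h.symm⟩

theorem eq_of_mem_inner (he : e ∈ G.edgeSet) (hf : f ∈ G.edgeSet) {z : ℂ}
    (hze : z ∈ d.inner e) (hzf : z ∈ d.inner f) : e = f := by
  obtain ⟨s, hs, rfl⟩ := hze
  obtain ⟨t, ht, h⟩ := hzf
  by_contra hne
  simp only [curve, he, hf, dif_pos, EmbeddingLike.apply_eq_iff_eq] at h
  exact d.arc_disjoint ⟨e, he⟩ ⟨f, hf⟩ (by simpa using hne) s hs t ht h.symm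

theorem mid_ne_point (he : e ∈ G.edgeSet) (v : V) : d.point v ≠ d.mid e := fun h =>
  point_notMem_inner he v (h ▸ d.mid_mem_inner e)

variable (d)

theorem exists_path_eq_curve (h : G.Adj u v) : ∃ A : Path (d.point u) (d.point v),
    (∀ t, A t = d.curve s(u, v) t) ∨ ∀ t, A t = d.curve s(u, v) (σ t) := by
  obtain ⟨x, y, huv, h₀, h₁⟩ := d.arc_ends ⟨s(u, v), h⟩
  obtain ⟨A, hA⟩ : ∃ A : Path (d.point x) (d.point y), ∀ t, A t = d.curve s(u, v) t :=
    ⟨⟨⟨_, d.continuous_curve s(u, v)⟩, by simp [curve, h, h₀, point],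
      by simp [curve, h, h₁, point]⟩, fun _ => rfl⟩
  rcases Sym2.eq_iff.1 huv with ⟨rfl, rfl⟩ | ⟨rfl, rfl⟩
  exacts [⟨A, .inl hA⟩, ⟨A.symm, .inr fun t => hA (σ t)⟩]

/-- The arc of the edge `s(u, v)` as a path from `u` to `v`, whichever way it is parametrised. -/
noncomputable def dartPath (h : G.Adj u v) : Path (d.point u) (d.point v) :=
  (d.exists_path_eq_curve h).choose

theorem dartPath_eq_curve (h : G.Adj u v) : (∀ t, d.dartPath h t = d.curve s(u, v) t) ∨
    ∀ t, d.dartPath h t = d.curve s(u, v) (σ t) :=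
  (d.exists_path_eq_curve h).choose_spec

theorem dartPath_unitMidpoint (h : G.Adj u v) : d.dartPath h unitMidpoint = d.mid s(u, v) := by
  rcases d.dartPath_eq_curve h with hA | hA
  · exact hA _
  · rw [hA, symm_unitMidpoint, mid]

variable {d}

theorem dartPath_mem_inner (h : G.Adj u v) {t : I} (h₀ : t ≠ 0) (h₁ : t ≠ 1) :
    d.dartPath h t ∈ d.inner s(u, v) := by
  have ht := And.intro (unitInterval.pos_iff_ne_zero.2 h₀) (unitInterval.lt_one_iff_ne_one.2 h₁)
  rcases d.dartPath_eq_curve h with hA | hA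
  · exact ⟨t, ht, (hA t).symm⟩
  · exact ⟨σ t, ⟨symm_one ▸ symm_lt_symm.2 ht.2, symm_zero ▸ symm_lt_symm.2 ht.1⟩, (hA t).symm⟩

theorem dartPath_eq_point (h : G.Adj u v) {t : I} {w : V} (ht : d.dartPath h t = d.point w) :
    t = 0 ∧ w = u ∨ t = 1 ∧ w = v := by
  by_cases h₀ : t = 0
  · exact .inl ⟨h₀, d.point_injective (by rw [← ht, h₀, Path.source])⟩
  by_cases h₁ : t = 1
  · exact .inr ⟨h₁, d.point_injective (by rw [← ht, h₁, Path.target])⟩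
  exact (point_notMem_inner h w (ht ▸ dartPath_mem_inner h h₀ h₁)).elim

theorem dartPath_mem (h : G.Adj u v) (t : I) : d.dartPath h t = d.point u ∨
    d.dartPath h t = d.point v ∨ d.dartPath h t ∈ d.inner s(u, v) := by
  by_cases h₀ : t = 0
  · exact .inl (by rw [h₀, Path.source])
  by_cases h₁ : t = 1
  · exact .inr (.inl (by rw [h₁, Path.target]))
  exact .inr (.inr (dartPath_mem_inner h h₀ h₁))

theorem dartPath_ne_mid (h : G.Adj u v) (hf : f ∈ G.edgeSet) (hne : s(u, v) ≠ f) (t : I) :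
    d.dartPath h t ≠ d.mid f := by
  intro ht
  rcases dartPath_mem (d := d) h t with hA | hA | hA
  · exact mid_ne_point hf u (hA ▸ ht)
  · exact mid_ne_point hf v (hA ▸ ht)
  · exact hne (eq_of_mem_inner h hf hA (ht ▸ d.mid_mem_inner f))

variable (d) in
/-- The parity of the number of turns of the arc of `e` around the midpoint of the arc of `f`. -/
noncomputable def parity (e f : Sym2 V) : ZMod 2 := turns fun t => d.curve e t - d.mid f

theorem turns_dartPath (h : G.Adj u v) (hf : f ∈ G.edgeSet) (hne : s(u, v) ≠ f) :
    ((turns fun t => d.dartPath h t - d.mid f : ℤ) : ZMod 2) = d.parity s(u, v) f := by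
  rcases d.dartPath_eq_curve h with hA | hA
  · simp only [hA, parity]
  · have hcurve (t : I) : d.curve s(u, v) t = d.dartPath h (σ t) := by rw [hA, symm_symm]
    simp only [hcurve, parity]
    rw [turns_comp_symm (g := fun t => d.dartPath h t - d.mid f) (by fun_prop)
      fun t => sub_ne_zero.2 (dartPath_ne_mid h hf hne t), Int.cast_neg, ZMod.neg_eq_self_mod_two]

end Drawing

section Trace

variable {V : Type*} {G : SimpleGraph V} (d : PlaneEmbedding G) {a b : V}

/-- The path in the plane that follows the drawing of a walk. -/
noncomputable def trace : {a b : V} → G.Walk a b → Path (d.point a) (d.point b)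
  | _, _, .nil => Path.refl _
  | _, _, .cons h p => (d.dartPath h).trans (trace p)

/-- The total parity of the turns of the edges of a walk around the midpoint of the arc of `f`. -/
noncomputable def walkParity (p : G.Walk a b) (f : Sym2 V) : ZMod 2 :=
  (p.edges.map fun e => d.parity e f).sum

variable {d} {p : G.Walk a b} {e f : Sym2 V} {v : V}

theorem trace_mem (p : G.Walk a b) (t : I) :
    (∃ v ∈ p.support, d.trace p t = d.point v) ∨ ∃ e ∈ p.edges, d.trace p t ∈ d.inner e := by
  induction p generalizing t with
  | nil => exact .inl ⟨_, by simp, rfl⟩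
  | cons h p ih =>
    rw [trace, Path.trans_apply]
    split_ifs
    · rcases dartPath_mem (d := d) h ⟨2 * t, _⟩ with ht | ht | ht
      · exact .inl ⟨_, by simp, ht⟩
      · exact .inl ⟨_, by simp, ht⟩
      · exact .inr ⟨_, by simp, ht⟩
    · rcases ih _ with ⟨v, hv, ht⟩ | ⟨e, he, ht⟩
      · exact .inl ⟨v, by simp [hv], ht⟩
      · exact .inr ⟨e, by simp [he], ht⟩

theorem mem_support_of_trace_eq_point {t : I} (ht : d.trace p t = d.point v) : v ∈ p.support := by
  rcases trace_mem (d := d) p t with ⟨w, hw, e⟩ | ⟨e, he, h⟩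
  · exact d.point_injective (ht.symm.trans e) ▸ hw
  · exact (point_notMem_inner (p.edges_subset_edgeSet he) v (ht ▸ h)).elim

theorem mem_edges_of_trace_mem_inner (hf : f ∈ G.edgeSet) {t : I}
    (ht : d.trace p t ∈ d.inner f) : f ∈ p.edges := by
  rcases trace_mem (d := d) p t with ⟨w, -, e⟩ | ⟨e, he, h⟩
  · exact (point_notMem_inner hf w (e ▸ ht)).elim
  · exact eq_of_mem_inner hf (p.edges_subset_edgeSet he) ht h ▸ he

theorem trace_ne_mid (hf : f ∈ G.edgeSet) (hfp : f ∉ p.edges) (t : I) : d.trace p t ≠ d.mid f :=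
  fun h => hfp (mem_edges_of_trace_mem_inner hf (h ▸ d.mid_mem_inner f))

theorem turns_trace (p : G.Walk a b) (hf : f ∈ G.edgeSet) (hfp : f ∉ p.edges) :
    ((turns fun t => d.trace p t - d.mid f : ℤ) : ZMod 2) = d.walkParity p f := by
  induction p with
  | nil =>
    simp [trace, walkParity, turns_const (sub_ne_zero.2 (mid_ne_point hf _))]
  | cons h p ih =>
    simp only [Walk.edges_cons, List.mem_cons, not_or] at hfp
    rw [trace, turns_trans (dartPath_ne_mid h hf (Ne.symm hfp.1)) (trace_ne_mid hf hfp.2),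
      Int.cast_add, turns_dartPath h hf (Ne.symm hfp.1), ih hfp.2]
    simp [walkParity]

theorem exists_isMarkedArc_trace (hp : p.IsPath) (he : e ∈ p.edges) :
    ∃ r, d.trace p r = d.mid e ∧ IsMarkedArc (d.trace p) r := by
  induction p with
  | nil => simp at he
  | @cons a c b h p ih =>
    rw [Walk.cons_isPath_iff] at hp
    have hab : b ≠ a := fun hab => hp.2 (hab ▸ p.end_mem_support)
    have hstart (s : I) (hs : d.dartPath h s = d.point a) : s = 0 :=
      ((dartPath_eq_point h hs).resolve_right fun hs => h.ne hs.2).1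
    have htail (t : I) : d.trace p t ≠ d.point a := fun ht =>
      hp.2 (mem_support_of_trace_eq_point ht)
    have hend {s : I} (hs : d.dartPath h s = d.point b) : s = 1 ∧ b = c :=
      (dartPath_eq_point h hs).resolve_left fun hs => hab hs.2
    rw [Walk.edges_cons, List.mem_cons] at he
    rcases he with rfl | he
    · exact ⟨unitMidpoint * unitMidpoint, by
        rw [trace, trans_unitMidpoint_mul, dartPath_unitMidpoint],
        isMarkedArc_trans_left unitMidpoint_pos.ne' hstart
          (fun s hs ht => (hs.trans_lt unitMidpoint_lt_one).ne (hend ht).1) htail⟩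
    · obtain ⟨r, hr, hmark⟩ := ih hp.1 he
      have hcb : b ≠ c := fun hbc => hmark.ne_target 0 nonneg' (by rw [Path.source, hbc])
      exact ⟨_, by rw [trace, trans_symm_unitMidpoint_mul, hr],
        isMarkedArc_trans_right hstart (fun s hs => hcb (hend hs).2) htail hmark⟩

end Trace

section WalkParity

variable {V : Type*} {G : SimpleGraph V} (d : PlaneEmbedding G) {a b c u v : V} {e f : Sym2 V}

theorem walkParity_append (p : G.Walk a b) (q : G.Walk b c) (f : Sym2 V) :
    d.walkParity (p.append q) f = d.walkParity p f + d.walkParity q f := by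
  simp [walkParity]

theorem walkParity_reverse (p : G.Walk a b) (f : Sym2 V) :
    d.walkParity p.reverse f = d.walkParity p f := by
  simp [walkParity, List.sum_reverse]

theorem walkParity_congr {p : G.Walk a b} {q : G.Walk u v} (h : p.edges.Perm q.edges)
    (f : Sym2 V) : d.walkParity p f = d.walkParity q f :=
  (h.map _).sum_eq

theorem turns_point_eq_turns_mid {C : G.Walk u u} (he : e ∈ G.edgeSet) (heC : e ∉ C.edges)
    (hv : v ∈ e) (hvC : v ∉ C.support) : turns (fun s => d.trace C s - d.point v) =
      turns (fun s => d.trace C s - d.mid e) := by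
  obtain ⟨w, rfl⟩ := hv
  have hadj : G.Adj v w := he
  have hhalf := turns_sub_eq_of_closed (C := d.trace C)
    (g := fun t => d.dartPath hadj (t * unitMidpoint)) (by fun_prop) ?_
  · simpa only [zero_mul, one_mul, Path.source, dartPath_unitMidpoint] using hhalf
  · intro s t hst
    by_cases h₀ : t * unitMidpoint = 0
    · rw [h₀, Path.source] at hst
      exact hvC (mem_support_of_trace_eq_point hst)
    · have h₁ : t * unitMidpoint ≠ 1 :=
        (unitInterval.mul_le_right.trans_lt unitMidpoint_lt_one).ne
      exact heC (mem_edges_of_trace_mem_inner he (hst ▸ dartPath_mem_inner hadj h₀ h₁))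

theorem walkParity_eq_of_mem {C : G.Walk u u} (he : e ∈ G.edgeSet) (hf : f ∈ G.edgeSet)
    (heC : e ∉ C.edges) (hfC : f ∉ C.edges) (hve : v ∈ e) (hvf : v ∈ f) (hvC : v ∉ C.support) :
    d.walkParity C e = d.walkParity C f := by
  rw [← turns_trace C he heC, ← turns_trace C hf hfC,
    ← d.turns_point_eq_turns_mid he heC hve hvC, ← d.turns_point_eq_turns_mid hf hfC hvf hvC]

end WalkParity

end PlaneEmbedding

section Theta

variable {V : Type*} {G : SimpleGraph V} {a b : V} {p q r : G.Walk a b}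

/-- Two walks with the same ends that share no edge, and no vertex besides those ends. -/
structure InternallyDisjoint (p q : G.Walk a b) : Prop where
  edges_disjoint : p.edges.Disjoint q.edges
  eq_or_eq : ∀ v ∈ p.support, v ∈ q.support → v = a ∨ v = b

theorem InternallyDisjoint.symm (h : InternallyDisjoint p q) : InternallyDisjoint q p :=
  ⟨h.edges_disjoint.symm, fun v hq hp => h.eq_or_eq v hp hq⟩

/-- Three paths with the same two distinct ends which form a theta graph. -/
structure IsTheta (p q r : G.Walk a b) : Prop where
  ne : a ≠ b
  isPath₁ : p.IsPath
  isPath₂ : q.IsPath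
  isPath₃ : r.IsPath
  disjoint₁₂ : InternallyDisjoint p q
  disjoint₂₃ : InternallyDisjoint q r
  disjoint₃₁ : InternallyDisjoint r p

theorem IsTheta.swap (h : IsTheta p q r) : IsTheta q p r :=
  ⟨h.ne, h.isPath₂, h.isPath₁, h.isPath₃, h.disjoint₁₂.symm, h.disjoint₃₁.symm, h.disjoint₂₃.symm⟩

namespace PlaneEmbedding

variable (d : PlaneEmbedding G)

theorem meetOnlyAtEnds_trace (h : InternallyDisjoint p q) :
    MeetOnlyAtEnds (d.trace p) (d.trace q) := by
  intro s t hst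
  rcases trace_mem (d := d) p s with ⟨v, hv, hs⟩ | ⟨e, he, hs⟩
  · have hvq : v ∈ q.support := mem_support_of_trace_eq_point (hst ▸ hs)
    rw [hs]
    exact (h.eq_or_eq v hv hvq).imp (congr_arg _) (congr_arg _)
  · exact (h.edges_disjoint he
      (mem_edges_of_trace_mem_inner (p.edges_subset_edgeSet he) (hst ▸ hs))).elim

/-- Of the three paths of a theta graph, an odd number lie inside the cycle formed by the other
two. -/
theorem walkParity_theta (h : IsTheta p q r) {e f g : Sym2 V} (he : e ∈ p.edges)
    (hf : f ∈ q.edges) (hg : g ∈ r.edges) :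
    (d.walkParity p g + d.walkParity q g) + (d.walkParity q e + d.walkParity r e) +
      (d.walkParity r f + d.walkParity p f) = 1 := by
  obtain ⟨x, hx, hpx⟩ := exists_isMarkedArc_trace (d := d) h.isPath₁ he
  obtain ⟨y, hy, hqy⟩ := exists_isMarkedArc_trace (d := d) h.isPath₂ hf
  obtain ⟨z, hz, hrz⟩ := exists_isMarkedArc_trace (d := d) h.isPath₃ hg
  have hodd := odd_turns_theta (d.meetOnlyAtEnds_trace h.disjoint₁₂)
    (d.meetOnlyAtEnds_trace h.disjoint₂₃) (d.meetOnlyAtEnds_trace h.disjoint₃₁) hpx hqy hrz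
  rw [hx, hy, hz, ← ZMod.intCast_eq_one_iff_odd] at hodd
  have heG := p.edges_subset_edgeSet he
  have hfG := q.edges_subset_edgeSet hf
  have hgG := r.edges_subset_edgeSet hg
  push_cast at hodd
  rw [turns_trace p hgG fun hgp => h.disjoint₃₁.edges_disjoint hg hgp,
    turns_trace q hgG fun hgq => h.disjoint₂₃.edges_disjoint hgq hg,
    turns_trace q heG fun heq => h.disjoint₁₂.edges_disjoint he heq,
    turns_trace r heG fun her => h.disjoint₃₁.edges_disjoint her he,
    turns_trace r hfG fun hfr => h.disjoint₂₃.edges_disjoint hf hfr,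
    turns_trace p hfG fun hfp => h.disjoint₁₂.edges_disjoint hfp hf] at hodd
  simpa only [CharTwo.sub_eq_add] using hodd

end PlaneEmbedding

end Theta

section Cycles

variable {V : Type*} {G : SimpleGraph V} {a b u v w : V} {e : Sym2 V}

theorem InternallyDisjoint.isCycle {p q : G.Walk a b} (h : InternallyDisjoint p q) (hab : a ≠ b)
    (hp : p.IsPath) (hq : q.IsPath) : (p.append q.reverse).IsCycle := by
  refine hp.isCycle_append hq.reverse (fun v hvp hvq => ?_) ?_
  · rcases h.eq_or_eq v (List.mem_of_mem_tail hvp) (by simpa using List.mem_of_mem_tail hvq)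
      with rfl | rfl
    · have hnodup := hp.support_nodup
      rw [← p.cons_tail_support, List.nodup_cons] at hnodup
      exact hnodup.1 hvp
    · have hnodup := hq.reverse.support_nodup
      rw [← q.reverse.cons_tail_support, List.nodup_cons] at hnodup
      exact hnodup.1 hvq
  · by_contra! hlen
    have mem_edges : ∀ r : G.Walk a b, r.length ≤ 1 → s(a, b) ∈ r.edges
      | .nil, _ => (hab rfl).elim
      | .cons _ .nil, _ => by simp
      | .cons _ (.cons _ _), hr => by simp at hr
    rw [Walk.length_reverse] at hlen
    exact h.edges_disjoint (mem_edges p hlen.1) (mem_edges q hlen.2)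

theorem exists_internallyDisjoint_of_isCycle {C : G.Walk a a} (hC : C.IsCycle)
    (hb : b ∈ C.support) (hab : a ≠ b) : ∃ p q : G.Walk a b, p.IsPath ∧ q.IsPath ∧
      InternallyDisjoint p q ∧ C = p.append q.reverse := by
  classical
  have hsplit := C.take_spec hb
  have hC' := hsplit.symm ▸ hC
  refine ⟨C.takeUntil b hb, (C.dropUntil b hb).reverse,
    hC'.isPath_of_append_left (Walk.not_nil_of_ne hab.symm),
    (hC'.isPath_of_append_right (Walk.not_nil_of_ne hab)).reverse,
    ⟨fun e h₁ h₂ => ?_, fun w h₁ h₂ => ?_⟩, by simp⟩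
  · exact hC.isTrail.disjoint_edges_takeUntil_dropUntil hb h₁ (by simpa using h₂)
  · have hnodup := hC'.support_nodup
    rw [Walk.tail_support_append, List.nodup_append'] at hnodup
    rw [Walk.support_reverse, List.mem_reverse, ← Walk.cons_tail_support, List.mem_cons] at h₂
    rw [← Walk.cons_tail_support, List.mem_cons] at h₁
    exact h₁.imp_right fun h₁ => h₂.resolve_right (hnodup.2.2 h₁)

theorem exists_isPath_meeting_only_at_ends {S : Set V} (hv : v ∈ S) (hw : w ∈ S) (hvw : v ≠ w)
    (h : G.Reachable v w) : ∃ a ∈ S, ∃ b ∈ S, a ≠ b ∧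
      ∃ r : G.Walk a b, r.IsPath ∧ ∀ x ∈ r.support, x ∈ S → x = a ∨ x = b := by
  classical
  have hex : ∃ n : ℕ, ∃ v ∈ S, ∃ w ∈ S, v ≠ w ∧ ∃ r : G.Walk v w, r.length = n := by
    obtain ⟨r⟩ := h
    exact ⟨_, v, hv, w, hw, hvw, r, rfl⟩
  obtain ⟨a, ha, b, hb, hab, r, hr⟩ := Nat.find_spec hex
  refine ⟨a, ha, b, hb, hab, r.bypass, r.bypass_isPath, fun x hx hxS => ?_⟩
  by_contra! hne
  have hshort := Walk.length_takeUntil_lt_length hx hne.2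
  have hbypass := r.length_bypass_le_length
  have hmin := Nat.find_min' hex ⟨a, ha, x, hxS, hne.1.symm, r.bypass.takeUntil x hx, rfl⟩
  lia

theorem exists_isTheta_of_reachable {H : SimpleGraph V} (hHG : H ≤ G) {C : G.Walk u u}
    (hC : C.IsCycle) (hHC : ∀ e ∈ H.edgeSet, e ∉ C.edges) (hv : v ∈ C.support)
    (hw : w ∈ C.support) (hvw : v ≠ w) (h : H.Reachable v w) :
    ∃ (a b : V) (p q r : G.Walk a b), IsTheta p q r ∧
      (p.append q.reverse).edges.Perm C.edges ∧ ∀ e ∈ r.edges, e ∈ H.edgeSet := by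
  classical
  obtain ⟨a, ha, b, hb, hab, r, hr, hends⟩ :=
    exists_isPath_meeting_only_at_ends (S := {x | x ∈ C.support}) hv hw hvw h
  obtain ⟨p, q, hp, hq, hpq, hsplit⟩ := exists_internallyDisjoint_of_isCycle
    (hC.rotate ha) ((Walk.mem_support_rotate_iff ..).2 hb) hab
  have hperm : (p.append q.reverse).edges.Perm C.edges := hsplit ▸ (C.rotate_edges a ha).perm
  have hsupport {x : V} (hx : x ∈ p.support ∨ x ∈ q.support) : x ∈ C.support := by
    rw [← Walk.mem_support_rotate_iff C a ha, hsplit, Walk.mem_support_append_iff]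
    simpa using hx
  have hrH := r.edges_subset_edgeSet
  refine ⟨a, b, p, q, r.mapLe hHG, ⟨hab, hp, hq, (Walk.isPath_mapLe hHG).2 hr, hpq,
    ⟨fun e heq her => ?_, fun x hxq hxr => ?_⟩, ⟨fun e her hep => ?_, fun x hxr hxp => ?_⟩⟩,
    hperm, fun e her => ?_⟩ <;>
    simp only [Walk.edges_mapLe_eq_edges, Walk.support_mapLe_eq_support] at *
  · exact hHC e (hrH her) (hperm.subset (by simp [heq]))
  · exact hends x hxr (hsupport (.inr hxq))
  · exact hHC e (hrH her) (hperm.subset (by simp [hep]))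
  · exact hends x hxr (hsupport (.inl hxp))
  · exact hrH her

open Classical in
theorem card_toFinset_edges_of_isCycle {C : G.Walk u u} (hC : C.IsCycle) :
    C.edges.toFinset.card = C.length := by
  rw [List.toFinset_card_of_nodup hC.isTrail.edges_nodup, Walk.length_edges]

open Classical in
theorem card_toFinset_support_of_isCycle {C : G.Walk u u} (hC : C.IsCycle) :
    C.support.toFinset.card = C.length := by
  rw [← C.cons_tail_support, List.toFinset_cons,
    Finset.insert_eq_of_mem (List.mem_toFinset.2 (C.end_mem_tail_support hC.not_nil)),
    List.toFinset_card_of_nodup hC.support_nodup, List.length_tail, Walk.length_support,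
    Nat.add_sub_cancel]

theorem exists_mem_edges_of_not_nil {p : G.Walk a b} (hp : ¬p.Nil) : ∃ e, e ∈ p.edges :=
  List.exists_mem_of_ne_nil _ fun h => hp (Walk.edges_eq_nil.1 h)

end Cycles

section CoveredVertices

variable {V : Type*} {G : SimpleGraph V} {X Y X₁ X₂ Z : Finset (Sym2 V)} {e : Sym2 V} {u v x : V}

open Classical in
/-- The ends of the edges of a set. -/
noncomputable def coveredVertices (X : Finset (Sym2 V)) : Finset V := X.biUnion Sym2.toFinset

theorem mem_coveredVertices : v ∈ coveredVertices X ↔ ∃ e ∈ X, v ∈ e := by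
  classical simp [coveredVertices]

theorem coveredVertices_mono (h : X ⊆ Y) : coveredVertices X ⊆ coveredVertices Y := by
  classical exact Finset.biUnion_subset_biUnion_of_subset_left _ h

open Classical in
theorem coveredVertices_edges {p : G.Walk u v} (hp : ¬p.Nil) :
    coveredVertices p.edges.toFinset = p.support.toFinset := by
  ext w
  rw [mem_coveredVertices, List.mem_toFinset, Walk.mem_support_iff_exists_mem_edges_of_not_nil hp]
  simp

open Classical in
theorem card_add_card_le_of_subset_union (hX : X ⊆ X₁ ∪ X₂) (hZ : Z ⊆ X₁ ∩ X₂) :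
    X.card + Z.card ≤ X₁.card + X₂.card := by
  rw [← Finset.card_union_add_card_inter X₁]
  exact add_le_add (Finset.card_le_card hX) (Finset.card_le_card hZ)

theorem card_coveredVertices_add_le {W : Finset V} (h₁ : X₁ ⊆ X) (h₂ : X₂ ⊆ X)
    (hW : ∀ e ∈ X₁, ∀ f ∈ X₂, ∀ v ∈ e, v ∈ f → v ∈ W) :
    (coveredVertices X₁).card + (coveredVertices X₂).card ≤
      (coveredVertices X).card + W.card := by
  classical
  rw [← Finset.card_union_add_card_inter]
  refine add_le_add (Finset.card_le_card (Finset.union_subset (coveredVertices_mono h₁)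
    (coveredVertices_mono h₂))) (Finset.card_le_card fun v hv => ?_)
  rw [Finset.mem_inter, mem_coveredVertices, mem_coveredVertices] at hv
  obtain ⟨⟨e, he, hve⟩, f, hf, hvf⟩ := hv
  exact hW e he f hf v hve hvf

open Classical in
/-- The edges of the component of `x` in the graph with edge set `Y`. -/
noncomputable def componentEdges (Y : Finset (Sym2 V)) (x : V) : Finset (Sym2 V) :=
  {e ∈ Y | ∃ w ∈ e, (fromEdgeSet ↑Y).Reachable x w}

theorem componentEdges_subset (Y : Finset (Sym2 V)) (x : V) : componentEdges Y x ⊆ Y := by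
  classical exact Finset.filter_subset _ _

theorem mem_componentEdges_of_reachable (he : e ∈ Y) (hv : v ∈ e)
    (hx : (fromEdgeSet ↑Y).Reachable x v) : e ∈ componentEdges Y x := by
  classical exact Finset.mem_filter.2 ⟨he, v, hv, hx⟩

theorem reachable_of_mem_componentEdges (he : e ∈ componentEdges Y x) (hv : v ∈ e) :
    (fromEdgeSet ↑Y).Reachable x v := by
  classical
  obtain ⟨heY, w, hw, hxw⟩ := Finset.mem_filter.1 he
  by_cases hwv : w = v
  · exact hwv ▸ hxw
  · refine hxw.trans (Adj.reachable ((fromEdgeSet_adj _).2 ⟨?_, hwv⟩))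
    rwa [← (Sym2.mem_and_mem_iff hwv).1 ⟨hw, hv⟩]

theorem fromEdgeSet_le_of_subset {Y : Set (Sym2 V)} (h : Y ⊆ G.edgeSet) : fromEdgeSet Y ≤ G :=
  fun _ _ hxy => h ((fromEdgeSet_adj _).1 hxy).1

theorem edgeSet_fromEdgeSet_subset (Y : Set (Sym2 V)) : (fromEdgeSet Y).edgeSet ⊆ Y :=
  edgeSet_fromEdgeSet Y ▸ Set.sdiff_subset

end CoveredVertices

namespace PlaneEmbedding

section OneSide

variable {V : Type*} {G : SimpleGraph V}

open Classical in
/-- The edges of `X` that belong to `C` or lie on the side `s` of `C`. -/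
noncomputable def side (d : PlaneEmbedding G) {u : V} (X : Finset (Sym2 V)) (C : G.Walk u u)
    (s : ZMod 2) : Finset (Sym2 V) :=
  {e ∈ X | e ∈ C.edges ∨ d.walkParity C e = s}

/-- A set of edges that contains the cycle `C` and otherwise lies on the side `s` of `C`. -/
structure LiesOnSide (d : PlaneEmbedding G) {u : V} (X : Finset (Sym2 V)) (C : G.Walk u u)
    (s : ZMod 2) : Prop where
  isCycle : C.IsCycle
  subset_edgeSet : (X : Set (Sym2 V)) ⊆ G.edgeSet
  edges_subset : ∀ e ∈ C.edges, e ∈ X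
  walkParity_eq : ∀ e ∈ X, e ∉ C.edges → d.walkParity C e = s

variable {d : PlaneEmbedding G} {u : V} {X Y : Finset (Sym2 V)} {C : G.Walk u u} {e : Sym2 V}
  {s : ZMod 2}

theorem mem_side : e ∈ d.side X C s ↔ e ∈ X ∧ (e ∈ C.edges ∨ d.walkParity C e = s) := by
  classical exact Finset.mem_filter

theorem side_subset : d.side X C s ⊆ X := fun _ he => (mem_side.1 he).1

theorem walkParity_eq_of_mem_side (he : e ∈ d.side X C s) (heC : e ∉ C.edges) :
    d.walkParity C e = s :=
  (mem_side.1 he).2.resolve_left heC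

theorem liesOnSide_side (hC : C.IsCycle) (hX : (X : Set (Sym2 V)) ⊆ G.edgeSet)
    (hCX : ∀ e ∈ C.edges, e ∈ X) (s : ZMod 2) : d.LiesOnSide (d.side X C s) C s :=
  ⟨hC, fun _ he => hX (side_subset he), fun e he => mem_side.2 ⟨hCX e he, .inl he⟩,
    fun _ he heC => walkParity_eq_of_mem_side he heC⟩

theorem LiesOnSide.mono (h : d.LiesOnSide X C s) (hYX : Y ⊆ X) (hCY : ∀ e ∈ C.edges, e ∈ Y) :
    d.LiesOnSide Y C s :=
  ⟨h.isCycle, fun _ he => h.subset_edgeSet (hYX he), hCY,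
    fun e he => h.walkParity_eq e (hYX he)⟩

end OneSide

/-- The bound for edge sets with at most `N` edges that lie on one side of a cycle, in a plane
graph of girth at least `g + 2`. -/
def CycleBound {V : Type*} {G : SimpleGraph V} (d : PlaneEmbedding G) (g N : ℕ) : Prop :=
  ∀ (X : Finset (Sym2 V)) (u : V) (C : G.Walk u u) (s : ZMod 2), X.card ≤ N →
    d.LiesOnSide X C s → g * X.card + C.length + (g + 2) ≤ (g + 2) * (coveredVertices X).card

end PlaneEmbedding

/-- The bound for nonempty edge sets with at most `N` edges, in a planar graph of girth at least
`g + 2`. -/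
def EdgeBound {V : Type*} (G : SimpleGraph V) (g N : ℕ) : Prop :=
  ∀ X : Finset (Sym2 V), X.card ≤ N → (X : Set (Sym2 V)) ⊆ G.edgeSet → X.Nonempty →
    g * X.card + (g + 2) ≤ (g + 2) * (coveredVertices X).card

namespace PlaneEmbedding

section ThetaStep

variable {V : Type*} {G : SimpleGraph V}

/-- A set `X` of edges that contains a theta graph with paths `p`, `q`, `r` and lies on the side
`t` of the cycle formed by `p` and `q`. The paths `q` and `p` lie on the sides `y` and `z` of the
cycles that they do not belong to. -/
structure ContainsTheta (d : PlaneEmbedding G) {a b : V} (X : Finset (Sym2 V))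
    (p q r : G.Walk a b) (t y z : ZMod 2) : Prop where
  isTheta : IsTheta p q r
  subset_edgeSet : (X : Set (Sym2 V)) ⊆ G.edgeSet
  edges_subset₁ : ∀ e ∈ p.edges, e ∈ X
  edges_subset₂ : ∀ e ∈ q.edges, e ∈ X
  edges_subset₃ : ∀ e ∈ r.edges, e ∈ X
  walkParity_eq : ∀ f ∈ X, f ∉ p.edges → f ∉ q.edges → d.walkParity p f + d.walkParity q f = t
  walkParity₁₃ : ∀ f ∈ q.edges, d.walkParity p f + d.walkParity r f = y
  walkParity₂₃ : ∀ e ∈ p.edges, d.walkParity q e + d.walkParity r e = z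
  add_eq_one : t + y + z = 1

variable {d : PlaneEmbedding G} {a b u v : V} {X : Finset (Sym2 V)} {p q r : G.Walk a b}
  {e f : Sym2 V} {t y z : ZMod 2}

theorem walkParity_append_reverse :
    d.walkParity (p.append r.reverse) e = d.walkParity p e + d.walkParity r e := by
  rw [walkParity_append, walkParity_reverse]

theorem mem_edges_append_reverse : e ∈ (p.append r.reverse).edges ↔ e ∈ p.edges ∨ e ∈ r.edges := by
  simp

theorem mem_support_append_reverse :
    v ∈ (p.append r.reverse).support ↔ v ∈ p.support ∨ v ∈ r.support := by
  rw [Walk.mem_support_append_iff, Walk.support_reverse, List.mem_reverse]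

theorem exists_containsTheta (h : IsTheta p q r) (hpX : ∀ e ∈ p.edges, e ∈ X)
    (hqX : ∀ e ∈ q.edges, e ∈ X) (hrX : ∀ e ∈ r.edges, e ∈ X)
    (hX : (X : Set (Sym2 V)) ⊆ G.edgeSet)
    (ht : ∀ f ∈ X, f ∉ p.edges → f ∉ q.edges → d.walkParity p f + d.walkParity q f = t) :
    ∃ y z, d.ContainsTheta X p q r t y z := by
  obtain ⟨e₀, he₀⟩ := exists_mem_edges_of_not_nil (Walk.not_nil_of_ne (p := p) h.ne)
  obtain ⟨f₀, hf₀⟩ := exists_mem_edges_of_not_nil (Walk.not_nil_of_ne (p := q) h.ne)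
  obtain ⟨g₀, hg₀⟩ := exists_mem_edges_of_not_nil (Walk.not_nil_of_ne (p := r) h.ne)
  have hodd {e f : Sym2 V} (he : e ∈ p.edges) (hf : f ∈ q.edges) :
      t + (d.walkParity q e + d.walkParity r e) + (d.walkParity p f + d.walkParity r f) = 1 := by
    rw [← ht g₀ (hrX _ hg₀) (fun hgp => h.disjoint₃₁.edges_disjoint hg₀ hgp)
      fun hgq => h.disjoint₂₃.edges_disjoint hgq hg₀, add_comm (d.walkParity p f)]
    exact d.walkParity_theta h he hf hg₀
  refine ⟨_, _, h, hX, hpX, hqX, hrX, ht,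
    fun f hf => add_left_cancel ((hodd he₀ hf).trans (hodd he₀ hf₀).symm),
    fun e he => add_left_cancel (add_right_cancel ((hodd he hf₀).trans (hodd he₀ hf₀).symm)), ?_⟩
  rw [add_right_comm, hodd he₀ hf₀]

namespace ContainsTheta

theorem swap (h : d.ContainsTheta X p q r t y z) : d.ContainsTheta X q p r t z y where
  isTheta := h.isTheta.swap
  subset_edgeSet := h.subset_edgeSet
  edges_subset₁ := h.edges_subset₂
  edges_subset₂ := h.edges_subset₁
  edges_subset₃ := h.edges_subset₃
  walkParity_eq f hf hfq hfp := add_comm (d.walkParity q f) _ ▸ h.walkParity_eq f hf hfp hfq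
  walkParity₁₃ := h.walkParity₂₃
  walkParity₂₃ := h.walkParity₁₃
  add_eq_one := add_right_comm t y z ▸ h.add_eq_one

theorem liesOnSide (h : d.ContainsTheta X p q r t y z) :
    d.LiesOnSide (d.side X (p.append r.reverse) (y + 1)) (p.append r.reverse) (y + 1) :=
  liesOnSide_side (h.isTheta.disjoint₃₁.symm.isCycle h.isTheta.ne h.isTheta.isPath₁
    h.isTheta.isPath₃) h.subset_edgeSet
    (fun e he => (mem_edges_append_reverse.1 he).elim (h.edges_subset₁ e) (h.edges_subset₃ e)) _

theorem card_side_lt (h : d.ContainsTheta X p q r t y z) :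
    (d.side X (p.append r.reverse) (y + 1)).card < X.card := by
  obtain ⟨f, hf⟩ := exists_mem_edges_of_not_nil (Walk.not_nil_of_ne (p := q) h.isTheta.ne)
  refine Finset.card_lt_card
    (side_subset.ssubset_of_mem_notMem (h.edges_subset₂ f hf) fun hfs => ?_)
  have hfC : f ∉ (p.append r.reverse).edges := fun hfC =>
    (mem_edges_append_reverse.1 hfC).elim
      (fun hfp => h.isTheta.disjoint₁₂.edges_disjoint hfp hf)
      fun hfr => h.isTheta.disjoint₂₃.edges_disjoint hf hfr
  have hparity := walkParity_eq_of_mem_side hfs hfC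
  rw [walkParity_append_reverse, h.walkParity₁₃ f hf] at hparity
  exact succ_ne_self y hparity.symm

theorem walkParity_add_eq (h : d.ContainsTheta X p q r t y z)
    (hf : f ∈ d.side X (q.append r.reverse) (z + 1)) (hfp : f ∉ p.edges) (hfr : f ∉ r.edges) :
    d.walkParity p f + d.walkParity r f = y := by
  by_cases hfq : f ∈ q.edges
  · exact h.walkParity₁₃ f hfq
  · have hqr := walkParity_eq_of_mem_side hf (mt mem_edges_append_reverse.1 (by tauto))
    rw [walkParity_append_reverse] at hqr
    have hpq := h.walkParity_eq f (side_subset hf) hfp hfq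
    have hadd : ∀ p q r t y z : ZMod 2, p + q = t → q + r = z + 1 → t + y + z = 1 →
      p + r = y := by decide
    exact hadd _ _ _ _ _ _ hpq hqr h.add_eq_one

theorem mem_support (h : d.ContainsTheta X p q r t y z)
    (he : e ∈ d.side X (p.append r.reverse) (y + 1))
    (hf : f ∈ d.side X (q.append r.reverse) (z + 1)) (hve : v ∈ e) (hvf : v ∈ f)
    (hvr : v ∉ r.support) : v ∈ p.support := by
  by_contra hvp
  have hvC : v ∉ (p.append r.reverse).support := mt mem_support_append_reverse.1 (by tauto)
  have heC : e ∉ (p.append r.reverse).edges := fun heC =>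
    hvC (Walk.mem_support_of_mem_edges heC hve)
  have hfC : f ∉ (p.append r.reverse).edges := fun hfC =>
    hvC (Walk.mem_support_of_mem_edges hfC hvf)
  have hparity := d.walkParity_eq_of_mem (h.subset_edgeSet (side_subset he))
    (h.subset_edgeSet (side_subset hf)) heC hfC hve hvf hvC
  rw [walkParity_eq_of_mem_side he heC, walkParity_append_reverse] at hparity
  rw [mem_edges_append_reverse, not_or] at hfC
  exact succ_ne_self y (hparity.trans (h.walkParity_add_eq hf hfC.1 hfC.2))

theorem mem_side_or_mem_side (h : d.ContainsTheta X p q r t y z) (he : e ∈ X) :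
    e ∈ d.side X (p.append r.reverse) (y + 1) ∨ e ∈ d.side X (q.append r.reverse) (z + 1) := by
  simp only [mem_side, mem_edges_append_reverse, walkParity_append_reverse, he, true_and]
  by_cases hep : e ∈ p.edges
  · exact .inl (.inl (.inl hep))
  by_cases heq : e ∈ q.edges
  · exact .inr (.inl (.inl heq))
  have hor : ∀ p q r t y z : ZMod 2, p + q = t → t + y + z = 1 →
    p + r = y + 1 ∨ q + r = z + 1 := by decide
  exact (hor _ _ _ _ _ _ (h.walkParity_eq e he hep heq) h.add_eq_one).imp .inr .inr

theorem bound {g N : ℕ} (h : d.ContainsTheta X p q r t y z) (hN : d.CycleBound g N)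
    (hXN : X.card ≤ N + 1) : g * X.card + (p.length + q.length) + (g + 2) ≤
      (g + 2) * (coveredVertices X).card := by
  classical
  have hbound₁ := hN _ a _ _ (Nat.lt_succ_iff.1 (h.card_side_lt.trans_le hXN)) h.liesOnSide
  have hbound₂ := hN _ a _ _ (Nat.lt_succ_iff.1 (h.swap.card_side_lt.trans_le hXN))
    h.swap.liesOnSide
  have hedges := card_add_card_le_of_subset_union (X := X) (Z := r.edges.toFinset)
    (fun e he => Finset.mem_union.2 (h.mem_side_or_mem_side he)) fun e he => by
      have her := List.mem_toFinset.1 he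
      simp [mem_side, h.edges_subset₃ e her, her]
  have hvertices := card_coveredVertices_add_le (W := r.support.toFinset)
    (side_subset (d := d) (X := X) (C := p.append r.reverse) (s := y + 1))
    (side_subset (d := d) (X := X) (C := q.append r.reverse) (s := z + 1))
    fun e he f hf v hve hvf => by
      rw [List.mem_toFinset]
      by_contra hvr
      rcases h.isTheta.disjoint₁₂.eq_or_eq v (h.mem_support he hf hve hvf hvr)
        (h.swap.mem_support hf he hvf hve hvr) with rfl | rfl
      exacts [hvr r.start_mem_support, hvr r.end_mem_support]
  rw [List.toFinset_card_of_nodup h.isTheta.isPath₃.isTrail.edges_nodup,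
    Walk.length_edges] at hedges
  rw [List.toFinset_card_of_nodup h.isTheta.isPath₃.support_nodup,
    Walk.length_support] at hvertices
  rw [Walk.length_append, Walk.length_reverse] at hbound₁ hbound₂
  linarith [Nat.mul_le_mul_left g hedges, Nat.mul_le_mul_left (g + 2) hvertices]

end ContainsTheta

end ThetaStep

section Induction

variable {V : Type*} {G : SimpleGraph V} {d : PlaneEmbedding G} {g N : ℕ} {X : Finset (Sym2 V)}
  {u v w : V} {C : G.Walk u u} {s : ZMod 2}

open Classical in
theorem LiesOnSide.bound_of_subset (h : d.LiesOnSide X C s) (hlen : g + 2 ≤ C.length)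
    (hXC : X ⊆ C.edges.toFinset) :
    g * X.card + C.length + (g + 2) ≤ (g + 2) * (coveredVertices X).card := by
  obtain rfl := hXC.antisymm fun e he => h.edges_subset e (List.mem_toFinset.1 he)
  rw [coveredVertices_edges h.isCycle.not_nil, card_toFinset_support_of_isCycle h.isCycle,
    card_toFinset_edges_of_isCycle h.isCycle]
  linarith

open Classical in
theorem LiesOnSide.bound_of_reachable (h : d.LiesOnSide X C s) (hN : d.CycleBound g N)
    (hXN : X.card ≤ N + 1) (hv : v ∈ C.support) (hw : w ∈ C.support) (hvw : v ≠ w)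
    (hreach : (fromEdgeSet ↑(X \ C.edges.toFinset)).Reachable v w) :
    g * X.card + C.length + (g + 2) ≤ (g + 2) * (coveredVertices X).card := by
  have hdiff {e : Sym2 V} (he : e ∈ X \ C.edges.toFinset) : e ∈ X ∧ e ∉ C.edges := by
    simpa using he
  obtain ⟨a, b, p, q, r, htheta, hperm, hr⟩ := exists_isTheta_of_reachable
    (fromEdgeSet_le_of_subset fun e he => h.subset_edgeSet (hdiff he).1) h.isCycle
    (fun e he => (hdiff (edgeSet_fromEdgeSet_subset _ he)).2) hv hw hvw hreach
  have hmem {e : Sym2 V} : e ∈ C.edges ↔ e ∈ p.edges ∨ e ∈ q.edges := by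
    rw [← hperm.mem_iff, mem_edges_append_reverse]
  have hlen : C.length = p.length + q.length := by
    rw [← Walk.length_edges, ← hperm.length_eq, Walk.length_edges, Walk.length_append,
      Walk.length_reverse]
  obtain ⟨y, z, hX⟩ := exists_containsTheta htheta
    (fun e he => h.edges_subset e (hmem.2 (.inl he)))
    (fun e he => h.edges_subset e (hmem.2 (.inr he)))
    (fun e he => (hdiff (edgeSet_fromEdgeSet_subset _ (hr e he))).1) h.subset_edgeSet
    fun f hf hfp hfq => by
      rw [← walkParity_append_reverse, d.walkParity_congr hperm]
      exact h.walkParity_eq f hf (mt hmem.1 (by tauto))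
  rw [hlen]
  exact hX.bound hN hXN

open Classical in
theorem LiesOnSide.bound_of_not_reachable (h : d.LiesOnSide X C s) (hN : d.CycleBound g N)
    (hE : EdgeBound G g N) (hXN : X.card ≤ N + 1) (hXC : ¬X ⊆ C.edges.toFinset)
    (hreach : ∀ v ∈ C.support, ∀ w ∈ C.support, v ≠ w →
      ¬(fromEdgeSet ↑(X \ C.edges.toFinset)).Reachable v w) :
    g * X.card + C.length + (g + 2) ≤ (g + 2) * (coveredVertices X).card := by
  set Y := X \ C.edges.toFinset
  obtain ⟨f, hfY⟩ : ∃ f, f ∈ Y := Finset.sdiff_nonempty.2 hXC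
  obtain ⟨e₀, he₀⟩ := exists_mem_edges_of_not_nil h.isCycle.not_nil
  obtain ⟨x, hx⟩ : ∃ x, x ∈ f := ⟨_, f.out_fst_mem⟩
  set B := componentEdges Y x
  have hfB : f ∈ B := mem_componentEdges_of_reachable hfY hx .rfl
  have hBX : B ⊆ X := (componentEdges_subset Y x).trans Finset.sdiff_subset
  have hCB (e : Sym2 V) (he : e ∈ C.edges) : e ∈ X \ B := by
    refine Finset.mem_sdiff.2 ⟨h.edges_subset e he, fun heB => ?_⟩
    exact (Finset.mem_sdiff.1 (componentEdges_subset Y x heB)).2 (List.mem_toFinset.2 he)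
  have hcard := Finset.card_sdiff_add_card_eq_card hBX
  have hBpos := Finset.card_pos.2 ⟨f, hfB⟩
  have hrestpos := Finset.card_pos.2 ⟨e₀, hCB e₀ he₀⟩
  have hboundB := hE B (by lia) (fun e he => h.subset_edgeSet (hBX he)) ⟨f, hfB⟩
  have hboundC := hN (X \ B) u C s (by lia) (h.mono Finset.sdiff_subset hCB)
  set W := {v ∈ C.support.toFinset | (fromEdgeSet ↑Y).Reachable x v}
  have hvertices := card_coveredVertices_add_le (W := W) hBX (Finset.sdiff_subset (t := B))
    fun e he f hf v hve hvf => by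
      have hxv := reachable_of_mem_componentEdges he hve
      refine Finset.mem_filter.2 ⟨List.mem_toFinset.2 ?_, hxv⟩
      by_contra hvC
      obtain ⟨hfX, hfB⟩ := Finset.mem_sdiff.1 hf
      refine hfB (mem_componentEdges_of_reachable (Finset.mem_sdiff.2 ⟨hfX, fun hfC => hvC ?_⟩)
        hvf hxv)
      exact Walk.mem_support_of_mem_edges (List.mem_toFinset.1 hfC) hvf
  have hW : W.card ≤ 1 := Finset.card_le_one.2 fun v hv w hw => by
    rw [Finset.mem_filter, List.mem_toFinset] at hv hw
    by_contra hvw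
    exact hreach v hv.1 w hw.1 hvw (hv.2.symm.trans hw.2)
  have hone := Nat.mul_le_mul_left (g + 2) (hvertices.trans (Nat.add_le_add_left hW _))
  rw [← hcard]
  linarith

theorem CycleBound.succ (hgirth : ∀ (u : V) (C : G.Walk u u), C.IsCycle → g + 2 ≤ C.length)
    (hN : d.CycleBound g N) (hE : EdgeBound G g N) : d.CycleBound g (N + 1) := by
  classical
  intro X u C s hXN h
  by_cases hXC : X ⊆ C.edges.toFinset
  · exact h.bound_of_subset (hgirth u C h.isCycle) hXC
  by_cases hreach : ∀ v ∈ C.support, ∀ w ∈ C.support, v ≠ w →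
    ¬(fromEdgeSet ↑(X \ C.edges.toFinset)).Reachable v w
  · exact h.bound_of_not_reachable hN hE hXN hXC hreach
  · push Not at hreach
    obtain ⟨v, hv, w, hw, hvw, hreach⟩ := hreach
    exact h.bound_of_reachable hN hXN hv hw hvw hreach

open Classical in
theorem CycleBound.bound_of_isCycle (hN : d.CycleBound g N) (hXN : X.card ≤ N)
    (hX : (X : Set (Sym2 V)) ⊆ G.edgeSet) (hC : C.IsCycle) (hCX : ∀ e ∈ C.edges, e ∈ X) :
    g * X.card + (g + 2) ≤ (g + 2) * (coveredVertices X).card := by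
  have hbound (s : ZMod 2) := hN _ u C s ((Finset.card_le_card side_subset).trans hXN)
    (liesOnSide_side (d := d) hC hX hCX s)
  have hedges := card_add_card_le_of_subset_union (X := X) (Z := C.edges.toFinset)
    (X₁ := d.side X C 0) (X₂ := d.side X C 1)
    (fun e he => by
      have hor : ∀ s : ZMod 2, s = 0 ∨ s = 1 := by decide
      simp only [Finset.mem_union, mem_side, he, true_and]
      exact (hor (d.walkParity C e)).imp .inr .inr)
    fun e he => by
      have heC := List.mem_toFinset.1 he
      simp [mem_side, hCX e heC, heC]
  have hvertices := card_coveredVertices_add_le (W := C.support.toFinset)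
    (side_subset (d := d) (X := X) (C := C) (s := 0))
    (side_subset (d := d) (X := X) (C := C) (s := 1)) fun e he f hf v hve hvf => by
      rw [List.mem_toFinset]
      by_contra hvC
      have heC : e ∉ C.edges := fun h => hvC (Walk.mem_support_of_mem_edges h hve)
      have hfC : f ∉ C.edges := fun h => hvC (Walk.mem_support_of_mem_edges h hvf)
      have hparity := d.walkParity_eq_of_mem (hX (side_subset he)) (hX (side_subset hf)) heC hfC
        hve hvf hvC
      rw [walkParity_eq_of_mem_side he heC, walkParity_eq_of_mem_side hf hfC] at hparity
      exact zero_ne_one hparity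
  rw [card_toFinset_edges_of_isCycle hC] at hedges
  rw [card_toFinset_support_of_isCycle hC] at hvertices
  linarith [hbound 0, hbound 1, Nat.mul_le_mul_left g hedges,
    Nat.mul_le_mul_left (g + 2) hvertices]

end Induction

end PlaneEmbedding

section Induction

variable {V : Type*} {G : SimpleGraph V} {g N : ℕ} {X : Finset (Sym2 V)} {u v : V}

open Classical in
theorem EdgeBound.bound_insert (hE : EdgeBound G g N) (hXN : X.card ≤ N)
    (hX : (X : Set (Sym2 V)) ⊆ G.edgeSet) (v : V) :
    g * X.card + (g + 2) ≤ (g + 2) * (insert v (coveredVertices X)).card := by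
  rcases X.eq_empty_or_nonempty with rfl | hne
  · rw [Finset.card_empty, mul_zero, zero_add]
    exact Nat.le_mul_of_pos_right _ (Finset.card_pos.2 (Finset.insert_nonempty _ _))
  · exact (hE X hXN hX hne).trans
      (Nat.mul_le_mul_left _ (Finset.card_le_card (Finset.subset_insert _ _)))

open Classical in
theorem EdgeBound.bound_of_not_reachable (hE : EdgeBound G g N) (hXN : X.card ≤ N + 1)
    (hX : (X : Set (Sym2 V)) ⊆ G.edgeSet) (huv : s(u, v) ∈ X)
    (hreach : ¬(fromEdgeSet ↑(X.erase s(u, v))).Reachable u v) :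
    g * X.card + (g + 2) ≤ (g + 2) * (coveredVertices X).card := by
  have hYX := Finset.erase_subset s(u, v) X
  have hY := Finset.card_erase_add_one huv
  set Y := X.erase s(u, v)
  set B := componentEdges Y u
  have hBY : B ⊆ Y := componentEdges_subset Y u
  have hRX : Y \ B ⊆ X := Finset.sdiff_subset.trans hYX
  have hcard := Finset.card_sdiff_add_card_eq_card hBY
  have hboundB := hE.bound_insert (X := B) (by lia) (fun e he => hX (hYX (hBY he))) u
  have hboundR := hE.bound_insert (X := Y \ B) (by lia) (fun e he => hX (hRX he)) v
  have hdisjoint :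
      Disjoint (insert u (coveredVertices B)) (insert v (coveredVertices (Y \ B))) := by
    refine Finset.disjoint_left.2 fun w hwB hwR => ?_
    have huw : (fromEdgeSet ↑Y).Reachable u w := by
      rcases Finset.mem_insert.1 hwB with rfl | hw
      · rfl
      · obtain ⟨e, he, hwe⟩ := mem_coveredVertices.1 hw
        exact reachable_of_mem_componentEdges he hwe
    rcases Finset.mem_insert.1 hwR with rfl | hw
    · exact hreach huw
    · obtain ⟨e, he, hwe⟩ := mem_coveredVertices.1 hw
      obtain ⟨heY, heB⟩ := Finset.mem_sdiff.1 he
      exact heB (mem_componentEdges_of_reachable heY hwe huw)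
  have hvertices : insert u (coveredVertices B) ∪ insert v (coveredVertices (Y \ B)) ⊆
      coveredVertices X := Finset.union_subset
    (Finset.insert_subset (mem_coveredVertices.2 ⟨_, huv, Sym2.mem_mk_left u v⟩)
      (coveredVertices_mono (hBY.trans hYX)))
    (Finset.insert_subset (mem_coveredVertices.2 ⟨_, huv, Sym2.mem_mk_right u v⟩)
      (coveredVertices_mono hRX))
  have hsum := Finset.card_le_card hvertices
  rw [Finset.card_union_of_disjoint hdisjoint] at hsum
  rw [← hY, ← hcard]
  linarith [Nat.mul_le_mul_left (g + 2) hsum]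

theorem EdgeBound.succ {d : PlaneEmbedding G} (hN : d.CycleBound g (N + 1))
    (hE : EdgeBound G g N) : EdgeBound G g (N + 1) := by
  classical
  intro X hXN hX ⟨e, he⟩
  induction e with | _ u v
  have huv : G.Adj u v := hX he
  by_cases hreach : (fromEdgeSet ↑(X.erase s(u, v))).Reachable u v
  · obtain ⟨p, hp⟩ := hreach.symm.exists_isPath
    have hpX {e : Sym2 V} (he : e ∈ p.edges) : e ∈ X.erase s(u, v) :=
      edgeSet_fromEdgeSet_subset _ (p.edges_subset_edgeSet he)
    have hle := fromEdgeSet_le_of_subset fun e he => hX (Finset.erase_subset s(u, v) X he)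
    refine hN.bound_of_isCycle (C := Walk.cons huv (p.mapLe hle)) hXN hX ?_ fun e hep => ?_
    · rw [Walk.cons_isCycle_iff, Walk.isPath_mapLe, Walk.edges_mapLe_eq_edges]
      exact ⟨hp, fun h => Finset.notMem_erase _ _ (hpX h)⟩
    · rw [Walk.edges_cons, List.mem_cons, Walk.edges_mapLe_eq_edges] at hep
      rcases hep with rfl | hep
      exacts [he, Finset.mem_of_mem_erase (hpX hep)]
  · exact hE.bound_of_not_reachable hXN hX he hreach

theorem card_edges_le_of_girth (d : PlaneEmbedding G) (hgirth : ((g + 2 : ℕ) : ℕ∞) ≤ G.egirth)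
    (hX : (X : Set (Sym2 V)) ⊆ G.edgeSet) (hne : X.Nonempty) :
    g * X.card + (g + 2) ≤ (g + 2) * (coveredVertices X).card := by
  have hcycle (u : V) (C : G.Walk u u) (hC : C.IsCycle) : g + 2 ≤ C.length := by
    exact_mod_cast le_egirth.1 hgirth u C hC
  have hbounds (N : ℕ) : d.CycleBound g N ∧ EdgeBound G g N := by
    induction N with
    | zero =>
      refine ⟨fun X u C s hXN h => ?_, fun X hXN _ hne => ?_⟩
      · obtain ⟨e, he⟩ := exists_mem_edges_of_not_nil h.isCycle.not_nil
        exact absurd (Finset.card_pos.2 ⟨e, h.edges_subset e he⟩) hXN.not_gt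
      · exact absurd (Finset.card_pos.2 hne) hXN.not_gt
    | succ N ih =>
      have hN := ih.1.succ hcycle ih.2
      exact ⟨hN, ih.2.succ hN⟩
  exact (hbounds X.card).2 X le_rfl hX hne

end Induction

section Discharging

variable {V : Type*} [Fintype V] (H : SimpleGraph V) [DecidableRel H.Adj] (D : ℕ)

/-- The sum of the degrees of the neighbours of a vertex. -/
def neighborDegreeSum (v : V) : ℕ := ∑ w ∈ H.neighborFinset v, H.degree w

/-- A vertex whose neighbours have small total degree. When it is the last vertex to be coloured,
few colours are forbidden for it. `D` stands for a bound on the degrees. -/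
abbrev IsLight (v : V) : Prop := neighborDegreeSum H v ≤ D + 15

/-- The charge that `v` gives to its neighbour `w` in the discharging argument. -/
def charge (v w : V) : ℤ :=
  if 10 ≤ H.degree v then 6
  else if 3 ≤ H.degree v ∧ H.degree w = 2 then 6
  else if 3 ≤ H.degree v ∧ H.degree w = 3 ∧ (4 ≤ H.degree v ∨ ¬IsLight H D v) then 1
  else 0

/-- The charge that `v` gains from its neighbour `w`. -/
def netCharge (v w : V) : ℤ := charge H D w v - charge H D v w

/-- The charge of `v` after discharging, when the initial charge is `9 * H.degree v - 30`. -/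
def finalCharge (v : V) : ℤ :=
  9 * H.degree v - 30 + ∑ w ∈ H.neighborFinset v, netCharge H D v w

/-- A graph of maximum degree at most `D` without the configurations that are reducible for frugal
colouring. -/
structure IsFrugallyIrreducible : Prop where
  degree_le (v : V) : H.degree v ≤ D
  degree_ne_one (v : V) : H.degree v ≠ 1
  degree_ne_two {u v : V} (huv : H.Adj u v) (hu : IsLight H D u) (hv : IsLight H D v) :
    H.degree u ≠ 2
  degree_ne_three {u v : V} (huv : H.Adj u v) (hu : IsLight H D u) (hv : IsLight H D v)
    (hu₃ : H.degree u = 3) : H.degree v ≠ 3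

variable {H D} {v w : V}

theorem charge_nonneg : 0 ≤ charge H D v w := by
  unfold charge
  split_ifs <;> simp

theorem charge_le_six : charge H D v w ≤ 6 := by
  unfold charge
  split_ifs <;> simp

theorem charge_of_ten_le (hv : 10 ≤ H.degree v) : charge H D v w = 6 := if_pos hv

theorem charge_of_degree_eq_two (hv : H.degree v = 2) : charge H D v w = 0 := by
  simp [charge, hv]

theorem neg_six_le_netCharge : -6 ≤ netCharge H D v w := by
  have hout := charge_le_six (H := H) (D := D) (v := v) (w := w)
  have hin := charge_nonneg (H := H) (D := D) (v := w) (w := v)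
  unfold netCharge
  lia

theorem sum_netCharge : ∑ v, ∑ w ∈ H.neighborFinset v, netCharge H D v w = 0 := by
  simp only [netCharge, Finset.sum_sub_distrib, sub_eq_zero]
  exact Finset.sum_comm' (by simp [adj_comm])

theorem sum_finalCharge : ∑ v with 0 < H.degree v, finalCharge H D v =
    18 * (H.edgeFinset.card : ℤ) - 30 * ({v | 0 < H.degree v} : Finset V).card := by
  have hisolated {f : V → V → ℤ} : ∑ v with 0 < H.degree v, ∑ w ∈ H.neighborFinset v, f v w =
      ∑ v, ∑ w ∈ H.neighborFinset v, f v w := by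
    refine Finset.sum_filter_of_ne fun v _ hne => ?_
    obtain ⟨w, hw, -⟩ := Finset.exists_ne_zero_of_sum_ne_zero hne
    exact (H.degree_pos_iff_exists_adj v).2 ⟨w, (H.mem_neighborFinset v w).1 hw⟩
  have hdegree : ∑ v with 0 < H.degree v, (H.degree v : ℤ) = 2 * H.edgeFinset.card := by
    rw [Finset.sum_filter_of_ne fun v _ hne => by lia]
    exact_mod_cast H.sum_degrees_eq_twice_card_edges
  simp only [finalCharge, Finset.sum_add_distrib, Finset.sum_sub_distrib, hisolated, sum_netCharge,
    ← Finset.mul_sum, hdegree, Finset.sum_const, nsmul_eq_mul]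
  ring

theorem finalCharge_ge_of_le_netCharge {m : ℤ}
    (hm : ∀ w, H.Adj v w → m ≤ netCharge H D v w) :
    (9 + m) * H.degree v - 30 ≤ finalCharge H D v := by
  have hsum := Finset.card_nsmul_le_sum (H.neighborFinset v) (netCharge H D v) m
    fun w hw => hm w ((H.mem_neighborFinset v w).1 hw)
  rw [card_neighborFinset_eq_degree, nsmul_eq_mul] at hsum
  unfold finalCharge
  linarith

theorem le_sum_neighborFinset (hdeg : ∀ w, H.Adj v w → 2 ≤ H.degree w) {f : V → ℤ} {α β γ : ℤ}
    (h₂ : ∀ w, H.Adj v w → H.degree w = 2 → α ≤ f w)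
    (h₃ : ∀ w, H.Adj v w → H.degree w = 3 → β ≤ f w)
    (h₄ : ∀ w, H.Adj v w → 4 ≤ H.degree w → γ ≤ f w) :
    α * ({w ∈ H.neighborFinset v | H.degree w = 2}).card +
      β * ({w ∈ H.neighborFinset v | H.degree w = 3}).card +
      γ * ({w ∈ H.neighborFinset v | 4 ≤ H.degree w}).card ≤ ∑ w ∈ H.neighborFinset v, f w := by
  simp only [Finset.card_filter, Nat.cast_sum, Finset.mul_sum, ← Finset.sum_add_distrib]
  refine Finset.sum_le_sum fun w hw => ?_
  have hvw := (H.mem_neighborFinset v w).1 hw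
  obtain hw | hw | hw : H.degree w = 2 ∨ H.degree w = 3 ∨ 4 ≤ H.degree w := by
    have := hdeg w hvw
    lia
  · simpa [hw] using h₂ w hvw hw
  · simpa [hw] using h₃ w hvw hw
  · have hw₂ : H.degree w ≠ 2 := by lia
    have hw₃ : H.degree w ≠ 3 := by lia
    simpa [hw, hw₂, hw₃] using h₄ w hvw hw

namespace IsFrugallyIrreducible

theorem two_le_degree (h : IsFrugallyIrreducible H D) (hvw : H.Adj v w) : 2 ≤ H.degree w := by
  have hpos := (H.degree_pos_iff_exists_adj w).2 ⟨v, hvw.symm⟩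
  have hne := h.degree_ne_one w
  lia

theorem isLight_of_degree_eq_two (h : IsFrugallyIrreducible H D) (hvw : H.Adj v w)
    (hv : H.degree v = 2) (hw : H.degree w ≤ 15) : IsLight H D v := by
  classical
  have hmem : w ∈ H.neighborFinset v := (H.mem_neighborFinset v w).2 hvw
  obtain ⟨x, hx⟩ := Finset.card_eq_one.1 <| show ((H.neighborFinset v).erase w).card = 1 by
    rw [Finset.card_erase_of_mem hmem, card_neighborFinset_eq_degree, hv]
  rw [IsLight, neighborDegreeSum, ← Finset.add_sum_erase _ _ hmem, hx, Finset.sum_singleton]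
  have hxD := h.degree_le x
  lia

theorem not_isLight_of_degree_eq_two (h : IsFrugallyIrreducible H D) (hvw : H.Adj v w)
    (hw : H.degree w = 2) (hv : H.degree v ≤ 15) : ¬IsLight H D v := fun hlight =>
  h.degree_ne_two hvw.symm (h.isLight_of_degree_eq_two hvw.symm hw hv) hlight hw

theorem finalCharge_nonneg_of_degree_eq_two (h : IsFrugallyIrreducible H D) (hv : H.degree v = 2) :
    0 ≤ finalCharge H D v := by
  have hnet (w : V) (hvw : H.Adj v w) : 6 ≤ netCharge H D v w := by
    rw [netCharge, charge_of_degree_eq_two hv, sub_zero]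
    by_cases hw : 10 ≤ H.degree w
    · exact (charge_of_ten_le hw).ge
    have hlight := h.isLight_of_degree_eq_two hvw hv (by lia)
    have hw₂ : H.degree w ≠ 2 := fun hw₂ =>
      h.not_isLight_of_degree_eq_two hvw hw₂ (by lia) hlight
    have hw₃ : 3 ≤ H.degree w := lt_of_le_of_ne (h.two_le_degree hvw) hw₂.symm
    simp [charge, hw, hw₃, hv]
  have hfinal := finalCharge_ge_of_le_netCharge hnet
  lia

theorem one_le_netCharge_of_degree_eq_three (hv : H.degree v = 3) (hw : 4 ≤ H.degree w) :
    1 ≤ netCharge H D v w := by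
  have hw₂ : H.degree w ≠ 2 := by lia
  have hw₃ : H.degree w ≠ 3 := by lia
  have hw₃' : 3 ≤ H.degree w := by lia
  by_cases hw₁₀ : 10 ≤ H.degree w <;> simp [netCharge, charge, *]

theorem six_le_netCharge_of_degree_eq_three (hv : H.degree v = 3) (hw : 10 ≤ H.degree w) :
    6 ≤ netCharge H D v w := by
  have hw₂ : H.degree w ≠ 2 := by lia
  have hw₃ : H.degree w ≠ 3 := by lia
  simp [netCharge, charge, *]

theorem finalCharge_nonneg_of_degree_eq_three_of_isLight (h : IsFrugallyIrreducible H D)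
    (hv : H.degree v = 3) (hlight : IsLight H D v) : 0 ≤ finalCharge H D v := by
  have hnet (w : V) (hvw : H.Adj v w) : 1 ≤ netCharge H D v w := by
    have hw₂ : H.degree w ≠ 2 := fun hw₂ =>
      h.not_isLight_of_degree_eq_two hvw hw₂ (by lia) hlight
    by_cases hw₃ : H.degree w = 3
    · have hheavy : ¬IsLight H D w := fun hw => h.degree_ne_three hvw hlight hw hv hw₃
      simp [netCharge, charge, hv, hw₃, hlight, hheavy]
    · have hw := h.two_le_degree hvw
      exact one_le_netCharge_of_degree_eq_three hv (by lia)
  have hfinal := finalCharge_ge_of_le_netCharge hnet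
  lia

theorem finalCharge_nonneg_of_degree_eq_three_of_not_isLight (h : IsFrugallyIrreducible H D)
    (hv : H.degree v = 3) (hheavy : ¬IsLight H D v) : 0 ≤ finalCharge H D v := by
  classical
  have hcard : (H.neighborFinset v).card = 3 := by rw [card_neighborFinset_eq_degree, hv]
  obtain ⟨x, y, z, hxy, hxz, hyz, hN⟩ := Finset.card_eq_three.1 hcard
  have hnet (w : V) : H.degree w ≤ D ∧ -6 ≤ netCharge H D v w ∧
      (4 ≤ H.degree w → 1 ≤ netCharge H D v w) ∧ (10 ≤ H.degree w → 6 ≤ netCharge H D v w) :=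
    ⟨h.degree_le w, neg_six_le_netCharge, one_le_netCharge_of_degree_eq_three hv,
      six_le_netCharge_of_degree_eq_three hv⟩
  have hx := hnet x
  have hy := hnet y
  have hz := hnet z
  rw [IsLight, neighborDegreeSum, hN, Finset.sum_insert (by simp [hxy, hxz]),
    Finset.sum_pair hyz] at hheavy
  rw [finalCharge, hv, hN, Finset.sum_insert (by simp [hxy, hxz]), Finset.sum_pair hyz]
  lia

theorem finalCharge_nonneg_of_four_le_of_isLight (h : IsFrugallyIrreducible H D)
    (hv : 4 ≤ H.degree v) (hv₉ : H.degree v ≤ 9) (hlight : IsLight H D v) :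
    0 ≤ finalCharge H D v := by
  have hnet (w : V) (hvw : H.Adj v w) : -1 ≤ netCharge H D v w := by
    have hw₂ : H.degree w ≠ 2 := fun hw₂ =>
      h.not_isLight_of_degree_eq_two hvw hw₂ (by lia) hlight
    have hin := charge_nonneg (H := H) (D := D) (v := w) (w := v)
    have hv₁₀ : ¬10 ≤ H.degree v := by lia
    have hout : charge H D v w ≤ 1 := by
      simp only [charge, hv₁₀, hw₂, and_false, if_false]
      split_ifs <;> simp
    unfold netCharge
    lia
  have hfinal := finalCharge_ge_of_le_netCharge hnet
  lia

theorem le_netCharge_of_four_le (hv : 4 ≤ H.degree v) (hv₉ : H.degree v ≤ 9) :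
    (if H.degree w = 2 then -6 else if H.degree w = 3 then -1 else 0) ≤
      netCharge H D v w - if 10 ≤ H.degree w then 6 else 0 := by
  unfold netCharge charge
  split_ifs <;> lia

theorem le_sum_netCharge_of_four_le (h : IsFrugallyIrreducible H D) (hv : 4 ≤ H.degree v)
    (hv₉ : H.degree v ≤ 9) :
    6 * (({w ∈ H.neighborFinset v | 10 ≤ H.degree w}).card : ℤ) -
        6 * ({w ∈ H.neighborFinset v | H.degree w = 2}).card -
        ({w ∈ H.neighborFinset v | H.degree w = 3}).card ≤
      ∑ w ∈ H.neighborFinset v, netCharge H D v w := by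
  have hbound (w : V) := le_netCharge_of_four_le (D := D) (w := w) hv hv₉
  have hnet := le_sum_neighborFinset (v := v) (α := -6) (β := -1) (γ := 0)
    (f := fun w => netCharge H D v w - if 10 ≤ H.degree w then 6 else 0) (fun _ => h.two_le_degree)
    (fun w _ hw => by simpa [hw] using hbound w) (fun w _ hw => by simpa [hw] using hbound w)
    (fun w _ hw => le_trans (by split_ifs <;> lia) (hbound w))
  simp only [Finset.sum_sub_distrib, ← Finset.sum_filter, Finset.sum_const, nsmul_eq_mul] at hnet
  linarith

theorem neighborDegreeSum_le (h : IsFrugallyIrreducible H D) {m : ℕ}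
    (hle : ∀ w, H.Adj v w → H.degree w ≤ m) :
    neighborDegreeSum H v ≤ 2 * ({w ∈ H.neighborFinset v | H.degree w = 2}).card +
      3 * ({w ∈ H.neighborFinset v | H.degree w = 3}).card +
      m * ({w ∈ H.neighborFinset v | 4 ≤ H.degree w}).card := by
  have hsum := le_sum_neighborFinset (f := fun w => -(H.degree w : ℤ)) (α := -2) (β := -3)
    (γ := -m) (fun _ => h.two_le_degree) (fun w _ hw => by simp [hw]) (fun w _ hw => by simp [hw])
    (fun w hvw _ => by simpa using hle w hvw)
  rw [Finset.sum_neg_distrib] at hsum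
  rw [neighborDegreeSum, ← Nat.cast_le (α := ℤ)]
  push_cast
  linarith

theorem finalCharge_nonneg_of_four_le_of_not_isLight (h : IsFrugallyIrreducible H D)
    (hv : 4 ≤ H.degree v) (hv₉ : H.degree v ≤ 9) (hheavy : ¬IsLight H D v) :
    0 ≤ finalCharge H D v := by
  have hcount := le_sum_neighborFinset (v := v) (f := 1) (α := 1) (β := 1) (γ := 1)
    (fun _ => h.two_le_degree) (by simp) (by simp) (by simp)
  simp only [Pi.one_apply, Finset.sum_const, card_neighborFinset_eq_degree] at hcount
  have hnet := h.le_sum_netCharge_of_four_le hv hv₉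
  have hvD := h.degree_le v
  have hsum := h.neighborDegreeSum_le (v := v) fun w _ => h.degree_le w
  have hlarge : ({w ∈ H.neighborFinset v | 10 ≤ H.degree w}).card = 0 →
      neighborDegreeSum H v ≤ 2 * ({w ∈ H.neighborFinset v | H.degree w = 2}).card +
        3 * ({w ∈ H.neighborFinset v | H.degree w = 3}).card +
        9 * ({w ∈ H.neighborFinset v | 4 ≤ H.degree w}).card := fun hnone =>
    h.neighborDegreeSum_le fun w hvw => by
      have hw := Finset.filter_eq_empty_iff.1 (Finset.card_eq_zero.1 hnone)
        ((H.mem_neighborFinset v w).2 hvw)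
      lia
  unfold finalCharge
  rw [IsLight] at hheavy
  generalize ({w ∈ H.neighborFinset v | 4 ≤ H.degree w}).card = c at *
  obtain rfl | rfl | rfl | hc : c = 0 ∨ c = 1 ∨ c = 2 ∨ 3 ≤ c := by lia
  all_goals lia

theorem finalCharge_nonneg_of_ten_le (hv : 10 ≤ H.degree v) : 0 ≤ finalCharge H D v := by
  have hfinal := finalCharge_ge_of_le_netCharge fun w (_ : H.Adj v w) =>
    neg_six_le_netCharge (H := H) (D := D)
  lia

theorem finalCharge_nonneg (h : IsFrugallyIrreducible H D) (hv : 0 < H.degree v) :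
    0 ≤ finalCharge H D v := by
  have hv₁ := h.degree_ne_one v
  obtain hv₂ | hv₃ | ⟨hv₄, hv₉⟩ | hv₁₀ : H.degree v = 2 ∨ H.degree v = 3 ∨
      (4 ≤ H.degree v ∧ H.degree v ≤ 9) ∨ 10 ≤ H.degree v := by lia
  · exact h.finalCharge_nonneg_of_degree_eq_two hv₂
  · by_cases hlight : IsLight H D v
    · exact h.finalCharge_nonneg_of_degree_eq_three_of_isLight hv₃ hlight
    · exact h.finalCharge_nonneg_of_degree_eq_three_of_not_isLight hv₃ hlight
  · by_cases hlight : IsLight H D v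
    · exact h.finalCharge_nonneg_of_four_le_of_isLight hv₄ hv₉ hlight
    · exact h.finalCharge_nonneg_of_four_le_of_not_isLight hv₄ hv₉ hlight
  · exact finalCharge_nonneg_of_ten_le hv₁₀

end IsFrugallyIrreducible

theorem exists_light_edge (hD : ∀ v, H.degree v ≤ D) (h₁ : ∀ v, H.degree v ≠ 1)
    (hsparse : 3 * H.edgeFinset.card < 5 * ({v | 0 < H.degree v} : Finset V).card) :
    ∃ u v, H.Adj u v ∧ IsLight H D u ∧ IsLight H D v ∧
      (H.degree u = 2 ∨ H.degree u = 3 ∧ H.degree v = 3) := by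
  by_contra! hnone
  have hirreducible : IsFrugallyIrreducible H D :=
    { degree_le := hD
      degree_ne_one := h₁
      degree_ne_two := fun huv hu hv => (hnone _ _ huv hu hv).1
      degree_ne_three := fun huv hu hv => (hnone _ _ huv hu hv).2 }
  have hnonneg : 0 ≤ ∑ v with 0 < H.degree v, finalCharge H D v :=
    Finset.sum_nonneg fun v hv => hirreducible.finalCharge_nonneg (Finset.mem_filter.1 hv).2
  rw [sum_finalCharge] at hnonneg
  lia

end Discharging

section Frugal

variable {V α : Type*} {H : SimpleGraph V} {U : Set V} {k : ℕ} {c : V → α} {u v w : V}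

theorem frugalChromaticNumber_le_of_isFrugalColoring {n : ℕ} {c : V → Fin n}
    (h : H.IsFrugalColoring k c) : H.frugalChromaticNumber k ≤ n := by
  refine Nat.sInf_le ⟨fun v => c v, fun v => (c v).isLt, fun x y hxy => ?_, fun v a => ?_⟩
  · exact Fin.val_ne_of_ne (h.1 x y hxy)
  · by_cases ha : a < n
    · simpa [Fin.ext_iff] using h.2 v ⟨a, ha⟩
    · have hnone (x : V) : (c x : ℕ) ≠ a := by lia
      simp [hnone]

theorem deleteEdges_singleton_lt (huv : H.Adj u v) : H.deleteEdges {s(u, v)} < H :=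
  (deleteEdges_le _).lt_of_ne <| by simpa using huv

theorem deleteIncidenceSet_lt (huv : H.Adj u v) : H.deleteIncidenceSet u < H :=
  (H.deleteIncidenceSet_le u).lt_of_ne fun heq => by
    rw [← heq, deleteIncidenceSet_adj] at huv
    exact huv.2.1 rfl

variable [Fintype V]

open scoped Classical in
/-- The neighbours of `v` of colour `a` when the vertices of `U` are regarded as uncoloured. -/
noncomputable def neighborsOfColor (H : SimpleGraph V) (U : Set V) (c : V → α) (v : V) (a : α) :
    Finset V :=
  {x | H.Adj v x ∧ x ∉ U ∧ c x = a}

/-- A `k`-frugal colouring of all vertices but those of `U`. The neighbourhoods of the vertices of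
`U` are still required to contain each colour at most `k` times. -/
def IsFrugalOff (H : SimpleGraph V) (U : Set V) (k : ℕ) (c : V → α) : Prop :=
  (∀ x ∉ U, ∀ y ∉ U, H.Adj x y → c x ≠ c y) ∧ ∀ v a, (neighborsOfColor H U c v a).card ≤ k

theorem mem_neighborsOfColor {a : α} {x : V} :
    x ∈ neighborsOfColor H U c v a ↔ H.Adj v x ∧ x ∉ U ∧ c x = a := by
  simp [neighborsOfColor]

theorem isFrugalOff_bot : IsFrugalOff (⊥ : SimpleGraph V) U k c := by
  simp [IsFrugalOff, neighborsOfColor]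

theorem IsFrugalOff.isFrugalColoring (h : IsFrugalOff H ∅ k c) : H.IsFrugalColoring k c := by
  refine ⟨fun x y => h.1 x (by simp) y (by simp), fun v a => ?_⟩
  convert h.2 v a
  simp [neighborsOfColor, ← Set.ncard_coe_finset]

section Extension

theorem IsFrugalOff.update [DecidableEq V] {a : α} (h : IsFrugalOff H U k c)
    (hne : ∀ w, H.Adj u w → c w ≠ a)
    (hlt : ∀ w, H.Adj u w → (neighborsOfColor H U c w a).card < k) :
    IsFrugalOff H (U \ {u}) k (Function.update c u a) := by
  refine ⟨fun x hx y hy hxy => ?_, fun v b => ?_⟩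
  · obtain rfl | hxu := eq_or_ne x u
    · simpa [hxy.ne'] using (hne y hxy).symm
    obtain rfl | hyu := eq_or_ne y u
    · simpa [hxy.ne] using hne x hxy.symm
    · simpa [hxu, hyu] using h.1 x (fun hxU => hx ⟨hxU, hxu⟩) y (fun hyU => hy ⟨hyU, hyu⟩) hxy
  · have hsubset : neighborsOfColor H (U \ {u}) (Function.update c u a) v b ⊆
        insert u (neighborsOfColor H U c v b) := by
      intro x hx
      obtain rfl | hxu := eq_or_ne x u
      · exact Finset.mem_insert_self x _
      · simpa [mem_neighborsOfColor, hxu] using hx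
    by_cases hu : u ∈ neighborsOfColor H (U \ {u}) (Function.update c u a) v b
    · obtain ⟨hvu, -, hab⟩ := mem_neighborsOfColor.1 hu
      obtain rfl : a = b := by simpa using hab
      exact (Finset.card_le_card hsubset).trans <|
        (Finset.card_insert_le _ _).trans (hlt v hvu.symm)
    · rw [Finset.subset_insert_iff_of_notMem hu] at hsubset
      exact (Finset.card_le_card hsubset).trans (h.2 v b)

variable [Fintype α] [DecidableRel H.Adj]

open scoped Classical in
/-- The colours that cannot be given to a further neighbour of `v`. -/
noncomputable def fullColors (H : SimpleGraph V) (U : Set V) (k : ℕ) (c : V → α) (v : V) :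
    Finset α :=
  {a | k ≤ (neighborsOfColor H U c v a).card}

theorem card_fullColors_le (hk : 1 ≤ k) (hu : u ∈ U) (hwu : H.Adj w u) :
    (fullColors H U k c w).card ≤ (H.degree w - 1) / k := by
  classical
  rw [Nat.le_div_iff_mul_le hk]
  calc (fullColors H U k c w).card * k
      ≤ ∑ a ∈ fullColors H U k c w, (neighborsOfColor H U c w a).card := by
        rw [← smul_eq_mul]
        exact Finset.card_nsmul_le_sum _ _ _ fun a ha => (Finset.mem_filter.1 ha).2
    _ = ((fullColors H U k c w).biUnion (neighborsOfColor H U c w)).card := by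
        rw [Finset.card_biUnion]
        refine fun a _ b _ hab => Finset.disjoint_left.2 fun x hx hx' => ?_
        exact hab ((mem_neighborsOfColor.1 hx).2.2.symm.trans (mem_neighborsOfColor.1 hx').2.2)
    _ ≤ ((H.neighborFinset w).erase u).card := by
        refine Finset.card_le_card fun x hx => ?_
        obtain ⟨a, -, hx⟩ := Finset.mem_biUnion.1 hx
        obtain ⟨hwx, hxU, -⟩ := mem_neighborsOfColor.1 hx
        exact Finset.mem_erase.2 ⟨fun hxu => hxU (hxu ▸ hu), (H.mem_neighborFinset w x).2 hwx⟩
    _ = H.degree w - 1 := by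
        rw [Finset.card_erase_of_mem ((H.mem_neighborFinset w u).2 hwu),
          card_neighborFinset_eq_degree]

theorem IsFrugalOff.exists_update [DecidableEq V] (h : IsFrugalOff H U k c) (hk : 1 ≤ k)
    (hu : u ∈ U)
    (hcard : H.degree u + ∑ w ∈ H.neighborFinset u, (H.degree w - 1) / k < Fintype.card α) :
    ∃ a, IsFrugalOff H (U \ {u}) k (Function.update c u a) := by
  classical
  have hforbidden : ((H.neighborFinset u).image c ∪
      (H.neighborFinset u).biUnion (fullColors H U k c)).card < Fintype.card α := by
    refine ((Finset.card_union_le _ _).trans (add_le_add Finset.card_image_le ?_)).trans_lt hcard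
    exact Finset.card_biUnion_le.trans <| Finset.sum_le_sum fun w hw =>
      card_fullColors_le hk hu ((H.mem_neighborFinset u w).1 hw).symm
  obtain ⟨a, ha⟩ : ∃ a, a ∉ (H.neighborFinset u).image c ∪
      (H.neighborFinset u).biUnion (fullColors H U k c) := by
    by_contra! hall
    exact hforbidden.ne (by rw [Finset.eq_univ_iff_forall.2 hall, Finset.card_univ])
  simp only [Finset.mem_union, Finset.mem_image, Finset.mem_biUnion, mem_neighborFinset,
    fullColors, Finset.mem_filter_univ, not_or, not_exists, not_and, not_le] at ha
  exact ⟨a, h.update ha.1 ha.2⟩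

end Extension

theorem IsFrugalOff.of_deleteEdges (h : IsFrugalOff (H.deleteEdges {s(u, v)}) ∅ k c) :
    IsFrugalOff H {u, v} k c := by
  have hadj {x y : V} (hy : y ∉ ({u, v} : Set V)) (hxy : H.Adj x y) :
      (H.deleteEdges {s(u, v)}).Adj x y := by
    refine deleteEdges_adj.2 ⟨hxy, fun heq => hy ?_⟩
    have hmem : y ∈ s(u, v) := heq ▸ Sym2.mem_mk_right x y
    simpa using hmem
  refine ⟨fun x _ y hy hxy => h.1 x (by simp) y (by simp) (hadj hy hxy), fun x a => ?_⟩
  refine (Finset.card_le_card fun y hy => ?_).trans (h.2 x a)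
  obtain ⟨hxy, hyU, hya⟩ := mem_neighborsOfColor.1 hy
  exact mem_neighborsOfColor.2 ⟨hadj hyU hxy, by simp, hya⟩

theorem IsFrugalOff.of_deleteIncidenceSet [DecidableRel H.Adj] (hu : H.degree u ≤ k)
    (h : IsFrugalOff (H.deleteIncidenceSet u) ∅ k c) : IsFrugalOff H {u} k c := by
  refine ⟨fun x hx y hy hxy => h.1 x (by simp) y (by simp) ?_, fun x a => ?_⟩
  · exact deleteIncidenceSet_adj.2 ⟨hxy, hx, hy⟩
  obtain rfl | hxu := eq_or_ne x u
  · refine le_trans ?_ hu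
    rw [← card_neighborFinset_eq_degree]
    exact Finset.card_le_card fun y hy =>
      (H.mem_neighborFinset x y).2 (mem_neighborsOfColor.1 hy).1
  · refine (Finset.card_le_card fun y hy => ?_).trans (h.2 x a)
    obtain ⟨hxy, hyu, hya⟩ := mem_neighborsOfColor.1 hy
    exact mem_neighborsOfColor.2 ⟨deleteIncidenceSet_adj.2 ⟨hxy, hxu, hyu⟩, by simp, hya⟩

section Sparse

variable {D : ℕ} [DecidableRel H.Adj]

theorem sum_degree_sub_one_add_degree :
    ∑ w ∈ H.neighborFinset u, (H.degree w - 1) + H.degree u = neighborDegreeSum H u := by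
  rw [neighborDegreeSum, ← card_neighborFinset_eq_degree, Finset.card_eq_sum_ones,
    ← Finset.sum_add_distrib]
  refine Finset.sum_congr rfl fun w hw => Nat.sub_add_cancel ?_
  exact (H.degree_pos_iff_exists_adj w).2 ⟨u, ((H.mem_neighborFinset u w).1 hw).symm⟩

theorem IsLight.degree_add_sum_lt (hk : 1 ≤ k) (hlight : IsLight H D u)
    (hdeg : k = 1 ∨ H.degree u ≤ 6) :
    H.degree u + ∑ w ∈ H.neighborFinset u, (H.degree w - 1) / k < (D + 10 + (k - 1)) / k + 6 := by
  have hsum := sum_degree_sub_one_add_degree (H := H) (u := u)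
  rw [IsLight] at hlight
  obtain rfl | hdeg := hdeg
  · simp only [Nat.div_one]
    lia
  have hle : (∑ w ∈ H.neighborFinset u, (H.degree w - 1) / k) ≤ (D + 9) / k + (6 - H.degree u) :=
    calc ∑ w ∈ H.neighborFinset u, (H.degree w - 1) / k
        ≤ (∑ w ∈ H.neighborFinset u, (H.degree w - 1)) / k := by
          rw [Nat.le_div_iff_mul_le hk, Finset.sum_mul]
          exact Finset.sum_le_sum fun w _ => Nat.div_mul_le_self _ _
      _ ≤ (D + 9 + (6 - H.degree u) * k) / k := by
          have hmul := Nat.le_mul_of_pos_right (6 - H.degree u) hk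
          exact Nat.div_le_div_right (by lia)
      _ = (D + 9) / k + (6 - H.degree u) := Nat.add_mul_div_right _ _ hk
  have hceil : (D + 10 + (k - 1)) / k = (D + 9) / k + 1 := by
    rw [show D + 10 + (k - 1) = D + 9 + k by lia, Nat.add_div_right _ hk]
  lia

theorem isLight_of_degree_eq_one (hD : ∀ v, H.degree v ≤ D) (hu : H.degree u = 1) :
    IsLight H D u := by
  obtain ⟨w, hw⟩ := Finset.card_eq_one.1 ((H.card_neighborFinset_eq_degree u).trans hu)
  rw [IsLight, neighborDegreeSum, hw, Finset.sum_singleton]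
  exact (hD w).trans (Nat.le_add_right D 15)

variable [Fintype α]

theorem exists_isFrugalOff_of_deleteIncidenceSet
    (hα : (D + 10 + (k - 1)) / k + 6 ≤ Fintype.card α) (hk : 1 ≤ k)
    (hu : IsLight H D u) (huk : H.degree u ≤ k) (hu₆ : H.degree u ≤ 6)
    (h : IsFrugalOff (H.deleteIncidenceSet u) ∅ k c) :
    ∃ c' : V → α, IsFrugalOff H ∅ k c' := by
  classical
  obtain ⟨a, ha⟩ := (h.of_deleteIncidenceSet huk).exists_update hk (Set.mem_singleton u)
    ((hu.degree_add_sum_lt hk (.inr hu₆)).trans_le hα)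
  exact ⟨_, by simpa using ha⟩

theorem exists_isFrugalOff_of_deleteEdges
    (hα : (D + 10 + (k - 1)) / k + 6 ≤ Fintype.card α) (hk : 1 ≤ k)
    (huv : u ≠ v) (hu : IsLight H D u) (hv : IsLight H D v)
    (hu₆ : k = 1 ∨ H.degree u ≤ 6) (hv₆ : k = 1 ∨ H.degree v ≤ 6)
    (h : IsFrugalOff (H.deleteEdges {s(u, v)}) ∅ k c) : ∃ c' : V → α, IsFrugalOff H ∅ k c' := by
  classical
  obtain ⟨a, ha⟩ := h.of_deleteEdges.exists_update hk (Set.mem_insert u {v})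
    ((hu.degree_add_sum_lt hk hu₆).trans_le hα)
  rw [Set.insert_sdiff_self_of_notMem (by simpa using huv)] at ha
  obtain ⟨b, hb⟩ := ha.exists_update hk (Set.mem_singleton v)
    ((hv.degree_add_sum_lt hk hv₆).trans_le hα)
  exact ⟨_, by simpa using hb⟩

theorem exists_isFrugalOff_of_sparse
    (hα : (D + 10 + (k - 1)) / k + 6 ≤ Fintype.card α) (hk : 1 ≤ k)
    (hD : ∀ v, H.degree v ≤ D)
    (hsparse : ∀ (K : SimpleGraph V) [DecidableRel K.Adj], K ≤ H → K ≠ ⊥ →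
      3 * K.edgeFinset.card < 5 * ({v | 0 < K.degree v} : Finset V).card) :
    ∃ c : V → α, IsFrugalOff H ∅ k c := by
  classical
  suffices hsub : ∀ K ≤ H, ∃ c : V → α, IsFrugalOff K ∅ k c from hsub H le_rfl
  intro K
  induction K using WellFoundedLT.induction with
  | ind K ih =>
  intro hKH
  obtain rfl | hne := eq_or_ne K ⊥
  · have : Nonempty α := Fintype.card_pos_iff.1 (by lia)
    exact ⟨fun _ => Classical.arbitrary α, isFrugalOff_bot⟩
  have hDK (v : V) : K.degree v ≤ D := (degree_le_of_le hKH).trans (hD v)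
  have hdelete {u v : V} (huv : K.Adj u v) (hu : IsLight K D u) (huk : K.degree u ≤ k)
      (hu₆ : K.degree u ≤ 6) : ∃ c : V → α, IsFrugalOff K ∅ k c := by
    have hlt := deleteIncidenceSet_lt huv
    obtain ⟨c, hc⟩ := ih _ hlt (hlt.le.trans hKH)
    exact exists_isFrugalOff_of_deleteIncidenceSet hα hk hu huk hu₆ hc
  by_cases hone : ∃ u, K.degree u = 1
  · obtain ⟨u, hu⟩ := hone
    obtain ⟨v, huv⟩ := (K.degree_pos_iff_exists_adj u).1 (by lia)
    exact hdelete huv (isLight_of_degree_eq_one hDK hu) (by lia) (by lia)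
  push Not at hone
  obtain ⟨u, v, huv, hu, hv, hdeg⟩ := exists_light_edge hDK hone (hsparse K hKH hne)
  by_cases hu₂ : 2 ≤ k ∧ K.degree u = 2
  · exact hdelete huv hu (by lia) (by lia)
  · have hlt := deleteEdges_singleton_lt huv
    obtain ⟨c, hc⟩ := ih _ hlt (hlt.le.trans hKH)
    exact exists_isFrugalOff_of_deleteEdges hα hk huv.ne hu hv (by lia) (by lia) hc

end Sparse

theorem coveredVertices_edgeFinset [DecidableRel H.Adj] :
    coveredVertices H.edgeFinset = ({v | 0 < H.degree v} : Finset V) := by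
  ext v
  rw [mem_coveredVertices, Finset.mem_filter_univ, degree_pos_iff_exists_adj]
  constructor
  · rintro ⟨e, he, w, rfl⟩
    exact ⟨w, by simpa using he⟩
  · rintro ⟨w, hvw⟩
    exact ⟨s(v, w), by simpa using hvw, Sym2.mem_mk_left v w⟩

end Frugal

/-- For `k ≥ 1` and a planar graph `G` of girth at least `5`,
`χ_k(G) ≤ ⌈(Δ(G) + 10)/k⌉ + 6` (ceiling written `(a + k - 1)/k`). -/
theorem frugalChromaticNumber_girth_five {V : Type*} [Fintype V] (G : SimpleGraph V)
    [DecidableRel G.Adj] (hG : G.IsPlanar) (k : ℕ) (hk : 1 ≤ k)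
    (hgirth : (5 : ℕ∞) ≤ G.egirth) :
    G.frugalChromaticNumber k ≤ (G.maxDegree + 10 + (k - 1)) / k + 6 := by
  obtain ⟨d⟩ := hG
  have hsparse (K : SimpleGraph V) [DecidableRel K.Adj] (hKG : K ≤ G) (hK : K ≠ ⊥) :
      3 * K.edgeFinset.card < 5 * ({v | 0 < K.degree v} : Finset V).card := by
    have hsubset : (K.edgeFinset : Set (Sym2 V)) ⊆ G.edgeSet := by simpa using edgeSet_mono hKG
    have hbound := card_edges_le_of_girth (g := 3) d hgirth hsubset (edgeFinset_nonempty.2 hK)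
    rw [coveredVertices_edgeFinset] at hbound
    lia
  obtain ⟨c, hc⟩ := exists_isFrugalOff_of_sparse (α := Fin ((G.maxDegree + 10 + (k - 1)) / k + 6))
    (by simp) hk G.degree_le_maxDegree hsparse
  exact frugalChromaticNumber_le_of_isFrugalColoring hc.isFrugalColoring
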